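/- arXiv:1603.00742 — 6 statements merged into one kernel-verified Lean document; each statement's English description precedes it below -/
import Mathlib

section
/- Fix a pair sigma = (sigma_1, sigma_2) of integers with sigma_1 + sigma_2 = 0. For a bipartition mu = (mu^1, mu^2) let phi_sigma(mu) be the unique partition with beta_0(phi_sigma(mu)) = (-1 + 2*beta_{sigma_1}(mu^1)) ⊔ (2*beta_{sigma_2}(mu^2)) (disjoint union). Let V be the Q-vector space with basis the set of all partitions and V2 the Q-vector space with basis the set of all bipartitions. For m >= 1 define the linear map B_m : V -> V by B_m(lambda) = sum over all nu obtained from (lambda,0) by adding an m-hook (x, x+m) of (-1)^N * nu, where N = #(beta_0(lambda) ∩ (x, x+m)) (open interval); for p = 1, 2 and n >= 1 define b_n^{(p)} : V2 -> V2 analogously, summing over additions of an n-hook (y, y+n) to (mu^p, sigma_p) with sign (-1)^{#(beta_{sigma_p}(mu^p) ∩ (y, y+n))}, leaving the other component unchanged. Then for every n >= 1 the linear map Phi : V2 -> V defined by Phi(mu) = (-1)^{a(phi_sigma(mu))} * phi_sigma(mu) satisfies Phi ∘ (b_n^{(1)} + b_n^{(2)}) = B_{2n} ∘ Phi. -/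
/-!
Write `β` for the beta-set of `φ μ`. Its odd elements `2y - 1` record the beta-set of `μ.1` and its
even elements `2y` that of `μ.2`, so adding a `2n`-hook to `φ μ` is the same as adding an `n`-hook
to one of the two components (`addHook_fst`, `addHook_snd`, `addHook_phi_cases`). Since a partition
is determined by its beta-set (`partition_ext`), `φ` is injective, and the claim reduces to
comparing signs: when `ν` arises from `lam` by adding the hook `(x, x + 2n)`, the
parity of `a(ν) - a(lam)` must be that of the number of beta-numbers in `(x, x + 2n)` whose parity
differs from that of `x`.

This holds because, up to a constant depending only on the truncation, `a(lam)` is the sum of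
`min b c` over the unordered pairs of distinct beta-numbers above a low cutoff (`pairSum`,
`pairSum_truncBeta`). Replacing `x` by `x + 2n` changes `min c x` by `0` if `c < x`, by `c - x` if
`x < c < x + 2n`, and by `2n` otherwise (`sign_addHook`).
-/

/-- A partition, encoded as an antitone, eventually-zero sequence of naturals;
`f i` is the part `λ_{i+1}` (so indexing is shifted by one). -/
def IsPartition (f : ℕ → ℕ) : Prop :=
  Antitone f ∧ ∃ N, ∀ i, N ≤ i → f i = 0

/-- The beta-set `β_d(λ) = {λ_u + d + 1 - u : u ≥ 1}` of the charged partition `(λ, d)`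
(with `u = i + 1`). -/
def betaSet (f : ℕ → ℕ) (d : ℤ) : Set ℤ :=
  {x | ∃ i : ℕ, x = (f i : ℤ) + d - i}

/-- The size `|λ| = ∑ λ_u`. -/
noncomputable def psize (f : ℕ → ℕ) : ℕ := ∑' i, f i

/-- Lusztig's `a`-function, `a(λ) = ∑_{u ≥ 1} (u - 1) λ_u`. -/
noncomputable def aFun (f : ℕ → ℕ) : ℕ := ∑' i, i * f i

/-- The type of partitions. -/
abbrev PartitionT := {f : ℕ → ℕ // IsPartition f}

/-- `AddHook e lam nu d x` : the charged partition `(nu, d)` is obtained from `(lam, d)`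
by adding the `e`-hook `(x, x + e)`. -/
def AddHook (e : ℤ) (lam nu : ℕ → ℕ) (d : ℤ) (x : ℤ) : Prop :=
  x ∈ betaSet lam d ∧ x + e ∉ betaSet lam d ∧
    betaSet nu d = (betaSet lam d \ {x}) ∪ {x + e}

section Helpers

open Finset

/-! ### Beta-sets and partitions -/

lemma strictMono_neg_beta {f : ℕ → ℕ} (hf : IsPartition f) (d : ℤ) :
    StrictMono (fun i : ℕ => (i : ℤ) - f i - d) := by
  intro i j hij
  have := hf.1 hij.le
  simp only
  omega

lemma partition_ext {f g : PartitionT} {d : ℤ} (h : betaSet f.1 d = betaSet g.1 d) : f = g := by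
  have key : (fun i : ℕ => (i : ℤ) - f.1 i - d) = fun i : ℕ => (i : ℤ) - g.1 i - d := by
    refine ((strictMono_neg_beta f.2 d).range_inj (strictMono_neg_beta g.2 d)).1 ?_
    ext z
    have hz := Set.ext_iff.1 h (-z)
    simp only [betaSet, Set.mem_ofPred_eq] at hz
    simp only [Set.mem_range]
    constructor
    · rintro ⟨i, hi⟩
      obtain ⟨j, hj⟩ := hz.1 ⟨i, by omega⟩
      exact ⟨j, by omega⟩
    · rintro ⟨i, hi⟩
      obtain ⟨j, hj⟩ := hz.2 ⟨i, by omega⟩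
      exact ⟨j, by omega⟩
  apply Subtype.ext
  funext i
  have := congrFun key i
  omega

/-- The finite set of the `K` largest beta-numbers of `(f, d)`. -/
def truncBeta (f : ℕ → ℕ) (d : ℤ) (K : ℕ) : Finset ℤ :=
  (range K).image (fun i : ℕ => (f i : ℤ) + d - i)

lemma beta_injective {f : ℕ → ℕ} (hf : IsPartition f) (d : ℤ) :
    Function.Injective (fun i : ℕ => (f i : ℤ) + d - i) := by
  intro i j hij
  apply (strictMono_neg_beta hf d).injective
  simp only at hij ⊢
  omega

lemma card_truncBeta {f : ℕ → ℕ} (hf : IsPartition f) (d : ℤ) (K : ℕ) :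
    (truncBeta f d K).card = K := by
  rw [truncBeta, card_image_of_injective _ (beta_injective hf d), card_range]

lemma mem_truncBeta {f : ℕ → ℕ} {d : ℤ} {K : ℕ} (hK : ∀ i, K ≤ i → f i = 0) (z : ℤ) :
    z ∈ truncBeta f d K ↔ z ∈ betaSet f d ∧ d - K < z := by
  simp only [truncBeta, mem_image, mem_range, betaSet, Set.mem_ofPred_eq]
  constructor
  · rintro ⟨i, hi, rfl⟩
    exact ⟨⟨i, rfl⟩, by omega⟩
  · rintro ⟨⟨i, rfl⟩, h⟩
    refine ⟨i, ?_, rfl⟩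
    by_contra hi
    have := hK i (by omega)
    omega

lemma mem_betaSet_of_le {f : ℕ → ℕ} {d : ℤ} {K : ℕ} (hK : ∀ i, K ≤ i → f i = 0) {z : ℤ}
    (hz : z ≤ d - K) : z ∈ betaSet f d := by
  refine ⟨(d - z).toNat, ?_⟩
  have := hK (d - z).toNat (by omega)
  omega

/-- Every set made of all integers `≤ d - k` and `k` larger ones is a beta-set of charge `d`. -/
lemma exists_partition (S : Finset ℤ) : ∀ d : ℤ, (∀ z ∈ S, d - S.card < z) →
    ∃ g : ℕ → ℕ, IsPartition g ∧ ∀ z, z ∈ betaSet g d ↔ z ∈ S ∨ z ≤ d - S.card := by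
  induction S using Finset.induction_on_max with
  | empty =>
    intro d _
    refine ⟨fun _ => 0, ⟨fun _ _ _ => le_rfl, 0, fun _ _ => rfl⟩, fun z => ?_⟩
    simp only [betaSet, Set.mem_ofPred_eq, Finset.notMem_empty, false_or, card_empty]
    constructor
    · rintro ⟨i, hi⟩
      push_cast at hi ⊢
      omega
    · intro h
      exact ⟨(d - z).toNat, by push_cast at h ⊢; omega⟩
  | insert a S ha ih =>
    intro d hd
    have hnot : a ∉ S := fun h => lt_irrefl _ (ha a h)
    rw [card_insert_of_notMem hnot] at hd ⊢
    push_cast at hd ⊢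
    -- Remove the maximum `a`, which is to become the first beta-number, and lower the charge by one.
    obtain ⟨g, hg, hgS⟩ := ih (d - 1) (fun z hz => by
      have := hd z (mem_insert_of_mem hz)
      omega)
    have h0 : (g 0 : ℤ) + d - 1 < a := by
      rcases (hgS ((g 0 : ℤ) + (d - 1) - (0 : ℕ))).1 ⟨0, rfl⟩ with h | h
      · have := ha _ h
        push_cast at this
        omega
      · have := hd a (mem_insert_self _ _)
        push_cast at h
        omega
    refine ⟨fun i => Nat.casesOn i (a - d).toNat g, ⟨?_, ?_⟩, fun z => ?_⟩
    · refine antitone_nat_of_succ_le fun i => ?_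
      cases i with
      | zero =>
        change g 0 ≤ (a - d).toNat
        omega
      | succ i => exact hg.1 (Nat.le_succ i)
    · obtain ⟨N, hN⟩ := hg.2
      refine ⟨N + 1, fun i hi => ?_⟩
      cases i with
      | zero => omega
      | succ i => exact hN i (by omega)
    · have hz := hgS z
      simp only [betaSet, Set.mem_ofPred_eq] at hz
      simp only [betaSet, Set.mem_ofPred_eq, mem_insert]
      constructor
      · rintro ⟨i, hi⟩
        cases i with
        | zero =>
          left; left
          change z = ((a - d).toNat : ℤ) + d - (0 : ℕ) at hi
          push_cast at hi
          omega
        | succ i =>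
          change z = (g i : ℤ) + d - (i + 1 : ℕ) at hi
          push_cast at hi
          rcases hz.1 ⟨i, by omega⟩ with h | h
          · exact Or.inl (Or.inr h)
          · right; omega
      · intro h
        by_cases hza : z = a
        · refine ⟨0, ?_⟩
          change z = ((a - d).toNat : ℤ) + d - (0 : ℕ)
          push_cast
          omega
        · obtain ⟨i, hi⟩ := hz.2 (by
            rcases h with (h | h) | h
            · exact absurd h hza
            · exact Or.inl h
            · right; omega)
          refine ⟨i + 1, ?_⟩
          change z = (g i : ℤ) + d - (i + 1 : ℕ)
          push_cast
          omega

lemma exists_addHook (f : PartitionT) (d e x : ℤ) (he : 0 ≤ e) (hx : x ∈ betaSet f.1 d)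
    (hxe : x + e ∉ betaSet f.1 d) : ∃ g : PartitionT, AddHook e f.1 g.1 d x := by
  obtain ⟨N, hN⟩ := f.2.2
  set K : ℕ := max N (d - x + 1).toNat with hKdef
  have hK : ∀ i, K ≤ i → f.1 i = 0 := fun i hi => hN i (by omega)
  have hmem := mem_truncBeta (d := d) hK
  have hxT : x ∈ truncBeta f.1 d K := (hmem x).2 ⟨hx, by omega⟩
  set S := insert (x + e) ((truncBeta f.1 d K).erase x) with hS
  have hcard : S.card = K := by
    rw [hS, card_insert_of_notMem (fun h => hxe ((hmem _).1 (mem_of_mem_erase h)).1),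
      card_erase_add_one hxT, card_truncBeta f.2]
  obtain ⟨g, hg, hgS⟩ := exists_partition S d (by
    intro z hz
    rw [hcard]
    rcases mem_insert.1 hz with rfl | h
    · omega
    · exact ((hmem z).1 (mem_of_mem_erase h)).2)
  refine ⟨⟨g, hg⟩, hx, hxe, ?_⟩
  ext z
  rw [hgS z, hcard, hS, mem_insert, mem_erase, hmem z]
  simp only [Set.mem_union, Set.mem_sdiff, Set.mem_singleton_iff]
  constructor
  · rintro ((h | h) | h)
    · exact Or.inr h
    · exact Or.inl ⟨h.2.1, h.1⟩
    · exact Or.inl ⟨mem_betaSet_of_le hK h, by omega⟩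
  · rintro (⟨h1, h2⟩ | h)
    · by_cases hz : z ≤ d - K
      · exact Or.inr hz
      · exact Or.inl (Or.inr ⟨h2, h1, by omega⟩)
    · exact Or.inl (Or.inl h)

/-! ### The `a`-function and the sign -/

/-- The sum of `min b c` over the unordered pairs `{b, c}` of distinct elements of `S`. -/
def pairSum (S : Finset ℤ) : ℤ := ∑ b ∈ S, ∑ c ∈ S, if b < c then b else 0

lemma pairSum_insert {T : Finset ℤ} {z : ℤ} (hz : z ∉ T) :
    pairSum (insert z T) = pairSum T + ∑ c ∈ T, min c z := by
  have h : ∑ c ∈ T, min c z =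
      ∑ c ∈ T, (if z < c then z else 0) + ∑ c ∈ T, (if c < z then c else 0) := by
    rw [← sum_add_distrib]
    refine sum_congr rfl fun c hc => ?_
    have : c ≠ z := fun h => hz (h ▸ hc)
    split_ifs <;> omega
  rw [h, pairSum, pairSum, sum_insert hz, sum_insert hz]
  simp only [sum_insert hz, sum_add_distrib, lt_irrefl, if_false]
  ring

/-- The `i`-th beta-number is the smaller one in exactly `i` pairs. -/
lemma pairSum_truncBeta {f : ℕ → ℕ} (hf : IsPartition f) {K : ℕ} (hK : ∀ i, K ≤ i → f i = 0) :
    (aFun f : ℤ) = pairSum (truncBeta f 0 K) + ∑ i ∈ range K, (i : ℤ) * i := by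
  have ha : aFun f = ∑ i ∈ range K, i * f i := by
    refine tsum_eq_sum fun i hi => ?_
    rw [hK i (by simpa using hi), mul_zero]
  have hinj := beta_injective hf 0
  rw [ha, pairSum, truncBeta, sum_image hinj.injOn, ← sum_add_distrib]
  push_cast
  refine sum_congr rfl fun i hi => ?_
  rw [sum_image hinj.injOn]
  have hlt : ∀ j : ℕ, ((f i : ℤ) + 0 - i < (f j : ℤ) + 0 - j) ↔ j < i := by
    intro j
    have := (strictMono_neg_beta hf 0).lt_iff_lt (a := j) (b := i)
    omega
  simp only [hlt]
  rw [← sum_filter, sum_const]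
  have hfil : (range K).filter (fun j => j < i) = range i := by
    ext j
    simp only [mem_filter, mem_range] at hi ⊢
    omega
  rw [hfil, card_range, nsmul_eq_mul]
  ring

/-- Adding the hook `(x, x + 2n)` changes the parity of the `a`-function by the number of
beta-numbers `c` in the open interval with `c - x` odd. -/
lemma sign_addHook {lam nu : ℕ → ℕ} (hl : IsPartition lam) (hn' : IsPartition nu) {n : ℕ} {x : ℤ}
    (h : AddHook (2 * (n : ℤ)) lam nu 0 x) :
    (-1 : ℚ) ^ aFun nu *
      (-1) ^ (betaSet lam 0 ∩ Set.Ioo x (x + 2 * (n : ℤ)) ∩ {c | Even (c - x)}).ncard =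
    (-1) ^ aFun lam * (-1) ^ (betaSet lam 0 ∩ Set.Ioo x (x + 2 * (n : ℤ))).ncard := by
  obtain ⟨hx, hxe, hnu⟩ := h
  obtain ⟨N1, hN1⟩ := hl.2
  obtain ⟨N2, hN2⟩ := hn'.2
  set K : ℕ := max (max N1 N2) (-x + 1).toNat with hKdef
  have hK1 : ∀ i, K ≤ i → lam i = 0 := fun i hi => hN1 i (by omega)
  have hK2 : ∀ i, K ≤ i → nu i = 0 := fun i hi => hN2 i (by omega)
  have m1 := mem_truncBeta (d := 0) hK1
  have m2 := mem_truncBeta (d := 0) hK2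
  set T := (truncBeta lam 0 K).erase x with hT
  have hxT : x ∉ T := notMem_erase _ _
  have hxeT : x + 2 * (n : ℤ) ∉ T := fun h => hxe ((m1 _).1 (mem_of_mem_erase h)).1
  have e1 : truncBeta lam 0 K = insert x T :=
    (insert_erase ((m1 x).2 ⟨hx, by omega⟩)).symm
  have e2 : truncBeta nu 0 K = insert (x + 2 * (n : ℤ)) T := by
    ext z
    rw [m2, hnu, mem_insert, hT, mem_erase, m1]
    simp only [Set.mem_union, Set.mem_sdiff, Set.mem_singleton_iff]
    constructor
    · rintro ⟨h | h, h2⟩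
      · exact Or.inr ⟨h.2, h.1, h2⟩
      · exact Or.inl h
    · rintro (h | h)
      · exact ⟨Or.inr h, by omega⟩
      · exact ⟨Or.inl ⟨h.2.1, h.1⟩, h.2.2⟩
  have a1 := pairSum_truncBeta hl hK1
  have a2 := pairSum_truncBeta hn' hK2
  rw [e1, pairSum_insert hxT] at a1
  rw [e2, pairSum_insert hxeT] at a2
  -- Both sets of beta-numbers in the hook interval are subsets of the truncation.
  have c1 : betaSet lam 0 ∩ Set.Ioo x (x + 2 * (n : ℤ)) =
      ((T.filter fun c => x < c ∧ c < x + 2 * (n : ℤ) : Finset ℤ) : Set ℤ) := by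
    ext z
    simp only [Set.mem_inter_iff, Set.mem_Ioo, coe_filter, Set.mem_ofPred_eq, hT, mem_erase, m1]
    constructor
    · rintro ⟨h1, h2⟩
      exact ⟨⟨by omega, h1, by omega⟩, h2⟩
    · rintro ⟨h1, h2⟩
      exact ⟨h1.2.1, h2⟩
  have c2 : betaSet lam 0 ∩ Set.Ioo x (x + 2 * (n : ℤ)) ∩ {c | Even (c - x)} =
      ((T.filter fun c => (x < c ∧ c < x + 2 * (n : ℤ)) ∧ Even (c - x) : Finset ℤ) : Set ℤ) := by
    rw [c1]
    ext z
    simp [and_assoc]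
  rw [c2, c1, Set.ncard_coe_finset, Set.ncard_coe_finset, ← pow_add, ← pow_add]
  set p := (T.filter fun c => (x < c ∧ c < x + 2 * (n : ℤ)) ∧ Even (c - x)).card with hp
  set q := (T.filter fun c => x < c ∧ c < x + 2 * (n : ℤ)).card with hq
  have hp' : (p : ℤ) = ∑ c ∈ T, if (x < c ∧ c < x + 2 * (n : ℤ)) ∧ Even (c - x) then 1 else 0 := by
    rw [hp, card_filter]; push_cast; rfl
  have hq' : (q : ℤ) = ∑ c ∈ T, if x < c ∧ c < x + 2 * (n : ℤ) then 1 else 0 := by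
    rw [hq, card_filter]; push_cast; rfl
  have hdiff : (2 : ℤ) ∣ ((aFun nu + p : ℕ) : ℤ) - ((aFun lam + q : ℕ) : ℤ) := by
    have : ((aFun nu + p : ℕ) : ℤ) - ((aFun lam + q : ℕ) : ℤ) =
        ∑ c ∈ T, (min c (x + 2 * (n : ℤ)) - min c x +
          (if (x < c ∧ c < x + 2 * (n : ℤ)) ∧ Even (c - x) then 1 else 0) -
          (if x < c ∧ c < x + 2 * (n : ℤ) then 1 else 0)) := by
      rw [sum_sub_distrib, sum_add_distrib, sum_sub_distrib, ← hp', ← hq']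
      push_cast
      rw [a1, a2]
      ring
    rw [this]
    refine dvd_sum fun c hc => ?_
    have h1 : c ≠ x := fun h => hxT (h ▸ hc)
    have h2 : c ≠ x + 2 * (n : ℤ) := fun h => hxeT (h ▸ hc)
    simp only [Int.even_iff]
    split_ifs <;> omega
  have hev : Even (aFun nu + p) ↔ Even (aFun lam + q) := by
    rw [Nat.even_iff, Nat.even_iff]
    omega
  by_cases he : Even (aFun nu + p)
  · rw [he.neg_one_pow, (hev.1 he).neg_one_pow]
  · rw [(Nat.not_even_iff_odd.1 he).neg_one_pow,
      (Nat.not_even_iff_odd.1 (fun h => he (hev.2 h))).neg_one_pow]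

/-! ### Hooks of `φ μ` and of the components of `μ` -/

/-- `A` is the set encoded by the pair `(C, D)`: its odd elements are `2y - 1` for `y ∈ C` and its
even elements are `2y` for `y ∈ D`. -/
def Interleaves (A C D : Set ℤ) : Prop :=
  A = ((fun b => -1 + 2 * b) '' C) ∪ ((fun b => 2 * b) '' D)

lemma Interleaves.odd_mem {A C D : Set ℤ} (h : Interleaves A C D) (y : ℤ) :
    -1 + 2 * y ∈ A ↔ y ∈ C := by
  rw [h]
  constructor
  · rintro (⟨z, hz, e⟩ | ⟨z, hz, e⟩)
    · simp only at e
      obtain rfl : z = y := by omega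
      exact hz
    · simp only at e
      omega
  · exact fun hy => Or.inl ⟨y, hy, rfl⟩

lemma Interleaves.even_mem {A C D : Set ℤ} (h : Interleaves A C D) (y : ℤ) :
    2 * y ∈ A ↔ y ∈ D := by
  rw [h]
  constructor
  · rintro (⟨z, hz, e⟩ | ⟨z, hz, e⟩)
    · simp only at e
      omega
    · simp only at e
      obtain rfl : z = y := by omega
      exact hz
  · exact fun hy => Or.inr ⟨y, hy, rfl⟩

lemma int_odd_or_even (z : ℤ) : (∃ y, z = -1 + 2 * y) ∨ ∃ y, z = 2 * y := by
  rcases Int.even_or_odd' z with ⟨k, h | h⟩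
  · exact Or.inr ⟨k, h⟩
  · exact Or.inl ⟨k + 1, by omega⟩

lemma ncard_odd {A C D : Set ℤ} (h : Interleaves A C D) (y : ℤ) (n : ℕ) :
    (A ∩ Set.Ioo (-1 + 2 * y) (-1 + 2 * y + 2 * (n : ℤ)) ∩ {c | Even (c - (-1 + 2 * y))}).ncard =
      (C ∩ Set.Ioo y (y + (n : ℤ))).ncard := by
  rw [← Set.ncard_image_of_injective (f := fun b : ℤ => -1 + 2 * b)
    (C ∩ Set.Ioo y (y + (n : ℤ))) (fun a b hab => by simp only at hab; omega)]
  congr 1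
  ext z
  simp only [Set.mem_inter_iff, Set.mem_Ioo, Set.mem_ofPred_eq, Set.mem_image]
  constructor
  · rintro ⟨⟨hz, h1⟩, k, hk⟩
    obtain rfl : z = -1 + 2 * (y + k) := by omega
    exact ⟨y + k, ⟨(h.odd_mem _).1 hz, by omega⟩, rfl⟩
  · rintro ⟨w, ⟨hw, h1⟩, rfl⟩
    exact ⟨⟨(h.odd_mem _).2 hw, by omega⟩, w - y, by omega⟩

lemma ncard_even {A C D : Set ℤ} (h : Interleaves A C D) (y : ℤ) (n : ℕ) :
    (A ∩ Set.Ioo (2 * y) (2 * y + 2 * (n : ℤ)) ∩ {c | Even (c - 2 * y)}).ncard =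
      (D ∩ Set.Ioo y (y + (n : ℤ))).ncard := by
  rw [← Set.ncard_image_of_injective (f := fun b : ℤ => 2 * b)
    (D ∩ Set.Ioo y (y + (n : ℤ))) (fun a b hab => by simp only at hab; omega)]
  congr 1
  ext z
  simp only [Set.mem_inter_iff, Set.mem_Ioo, Set.mem_ofPred_eq, Set.mem_image]
  constructor
  · rintro ⟨⟨hz, h1⟩, k, hk⟩
    obtain rfl : z = 2 * (y + k) := by omega
    exact ⟨y + k, ⟨(h.even_mem _).1 hz, by omega⟩, rfl⟩
  · rintro ⟨w, ⟨hw, h1⟩, rfl⟩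
    exact ⟨⟨(h.even_mem _).2 hw, by omega⟩, w - y, by omega⟩

section Phi

variable {σ1 σ2 : ℤ} {φ : PartitionT × PartitionT → PartitionT}

lemma phi_injective (hφ : ∀ μ : PartitionT × PartitionT,
    Interleaves (betaSet (φ μ).1 0) (betaSet μ.1.1 σ1) (betaSet μ.2.1 σ2)) :
    Function.Injective φ := by
  intro μ ν h
  have hν := hφ ν
  rw [← h] at hν
  refine Prod.ext (partition_ext (d := σ1) ?_) (partition_ext (d := σ2) ?_)
  · ext y
    rw [← (hφ μ).odd_mem, hν.odd_mem]
  · ext y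
    rw [← (hφ μ).even_mem, hν.even_mem]

lemma addHook_fst (hφ : ∀ μ : PartitionT × PartitionT,
    Interleaves (betaSet (φ μ).1 0) (betaSet μ.1.1 σ1) (betaSet μ.2.1 σ2))
    {n : ℕ} {μ : PartitionT × PartitionT} {ρ : PartitionT} {y : ℤ}
    (h : AddHook (n : ℤ) μ.1.1 ρ.1 σ1 y) :
    AddHook (2 * (n : ℤ)) (φ μ).1 (φ (ρ, μ.2)).1 0 (-1 + 2 * y) := by
  obtain ⟨h1, h2, h3⟩ := h
  have e : -1 + 2 * y + 2 * (n : ℤ) = -1 + 2 * (y + n) := by ring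
  refine ⟨((hφ μ).odd_mem y).2 h1, ?_, ?_⟩
  · rw [e, (hφ μ).odd_mem]
    exact h2
  · ext z
    simp only [Set.mem_union, Set.mem_sdiff, Set.mem_singleton_iff]
    rcases int_odd_or_even z with ⟨w, rfl⟩ | ⟨w, rfl⟩
    · rw [(hφ (ρ, μ.2)).odd_mem, (hφ μ).odd_mem, h3]
      simp only [Set.mem_union, Set.mem_sdiff, Set.mem_singleton_iff]
      have i1 : -1 + 2 * w = -1 + 2 * y ↔ w = y := by omega
      have i2 : -1 + 2 * w = -1 + 2 * y + 2 * (n : ℤ) ↔ w = y + n := by omega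
      rw [i1, i2]
    · rw [(hφ (ρ, μ.2)).even_mem, (hφ μ).even_mem]
      have i1 : ¬ (2 * w = -1 + 2 * y) := by omega
      have i2 : ¬ (2 * w = -1 + 2 * y + 2 * (n : ℤ)) := by omega
      simp [i1, i2]

lemma addHook_snd (hφ : ∀ μ : PartitionT × PartitionT,
    Interleaves (betaSet (φ μ).1 0) (betaSet μ.1.1 σ1) (betaSet μ.2.1 σ2))
    {n : ℕ} {μ : PartitionT × PartitionT} {ρ : PartitionT} {y : ℤ}
    (h : AddHook (n : ℤ) μ.2.1 ρ.1 σ2 y) :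
    AddHook (2 * (n : ℤ)) (φ μ).1 (φ (μ.1, ρ)).1 0 (2 * y) := by
  obtain ⟨h1, h2, h3⟩ := h
  have e : 2 * y + 2 * (n : ℤ) = 2 * (y + n) := by ring
  refine ⟨((hφ μ).even_mem y).2 h1, ?_, ?_⟩
  · rw [e, (hφ μ).even_mem]
    exact h2
  · ext z
    simp only [Set.mem_union, Set.mem_sdiff, Set.mem_singleton_iff]
    rcases int_odd_or_even z with ⟨w, rfl⟩ | ⟨w, rfl⟩
    · rw [(hφ (μ.1, ρ)).odd_mem, (hφ μ).odd_mem]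
      have i1 : ¬ (-1 + 2 * w = 2 * y) := by omega
      have i2 : ¬ (-1 + 2 * w = 2 * y + 2 * (n : ℤ)) := by omega
      simp [i1, i2]
    · rw [(hφ (μ.1, ρ)).even_mem, (hφ μ).even_mem, h3]
      simp only [Set.mem_union, Set.mem_sdiff, Set.mem_singleton_iff]
      have i1 : 2 * w = 2 * y ↔ w = y := by omega
      have i2 : 2 * w = 2 * y + 2 * (n : ℤ) ↔ w = y + n := by omega
      rw [i1, i2]

/-- Conversely, every `2n`-hook added to `φ μ` comes from an `n`-hook added to one component;
in particular the result is again in the range of `φ`. -/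
lemma addHook_phi_cases (hφ : ∀ μ : PartitionT × PartitionT,
    Interleaves (betaSet (φ μ).1 0) (betaSet μ.1.1 σ1) (betaSet μ.2.1 σ2))
    {n : ℕ} {μ : PartitionT × PartitionT} {κ : PartitionT} {x : ℤ}
    (h : AddHook (2 * (n : ℤ)) (φ μ).1 κ.1 0 x) :
    (∃ (y : ℤ) (ρ : PartitionT), x = -1 + 2 * y ∧ AddHook (n : ℤ) μ.1.1 ρ.1 σ1 y ∧
      κ = φ (ρ, μ.2)) ∨
    (∃ (y : ℤ) (ρ : PartitionT), x = 2 * y ∧ AddHook (n : ℤ) μ.2.1 ρ.1 σ2 y ∧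
      κ = φ (μ.1, ρ)) := by
  obtain ⟨h1, h2, h3⟩ := h
  rcases int_odd_or_even x with ⟨y, rfl⟩ | ⟨y, rfl⟩
  · left
    have e : -1 + 2 * y + 2 * (n : ℤ) = -1 + 2 * (y + n) := by ring
    rw [(hφ μ).odd_mem] at h1
    rw [e, (hφ μ).odd_mem] at h2
    obtain ⟨ρ, hρ⟩ := exists_addHook μ.1 σ1 n y (by omega) h1 h2
    exact ⟨y, ρ, rfl, hρ, partition_ext (d := 0) (h3.trans (addHook_fst hφ hρ).2.2.symm)⟩
  · right
    have e : 2 * y + 2 * (n : ℤ) = 2 * (y + n) := by ring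
    rw [(hφ μ).even_mem] at h1
    rw [e, (hφ μ).even_mem] at h2
    obtain ⟨ρ, hρ⟩ := exists_addHook μ.2 σ2 n y (by omega) h1 h2
    exact ⟨y, ρ, rfl, hρ, partition_ext (d := 0) (h3.trans (addHook_snd hφ hρ).2.2.symm)⟩

end Phi

lemma AddHook.ne {n : ℕ} (hn : 1 ≤ n) {f g : PartitionT} {d y : ℤ}
    (h : AddHook (n : ℤ) f.1 g.1 d y) : g ≠ f := by
  rintro rfl
  obtain ⟨h1, h2, h3⟩ := h
  rw [h3] at h1
  rcases h1 with h1 | h1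
  · exact h1.2 rfl
  · rw [Set.mem_singleton_iff] at h1
    omega

/-! ### Coefficients of a signed basis map -/

section SignedBasis

variable {φ : PartitionT × PartitionT → PartitionT}
    {Φ : (PartitionT × PartitionT →₀ ℚ) →ₗ[ℚ] (PartitionT →₀ ℚ)}

lemma signed_single (hΦ : ∀ μ : PartitionT × PartitionT,
      Φ (Finsupp.single μ 1) = ((-1 : ℚ) ^ aFun (φ μ).1) • Finsupp.single (φ μ) 1)
    (μ : PartitionT × PartitionT) (c : ℚ) :
    Φ (Finsupp.single μ c) = Finsupp.single (φ μ) ((-1 : ℚ) ^ aFun (φ μ).1 * c) := by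
  have : Finsupp.single μ c = c • Finsupp.single μ (1 : ℚ) := by simp
  rw [this, map_smul, hΦ]
  simp [mul_comm]

lemma signed_apply (hφ : Function.Injective φ) (hΦ : ∀ μ : PartitionT × PartitionT,
      Φ (Finsupp.single μ 1) = ((-1 : ℚ) ^ aFun (φ μ).1) • Finsupp.single (φ μ) 1)
    (v : PartitionT × PartitionT →₀ ℚ) (ν : PartitionT × PartitionT) :
    Φ v (φ ν) = (-1 : ℚ) ^ aFun (φ ν).1 * v ν := by
  classical
  induction v using Finsupp.induction_linear with
  | zero => simp
  | add v w hv hw => rw [map_add, Finsupp.add_apply, hv, hw, Finsupp.add_apply, mul_add]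
  | single μ c =>
    rw [signed_single hΦ, Finsupp.single_apply, Finsupp.single_apply]
    by_cases h : μ = ν
    · simp [h]
    · simp [h, hφ.ne h]

lemma signed_apply_notMem (hΦ : ∀ μ : PartitionT × PartitionT,
      Φ (Finsupp.single μ 1) = ((-1 : ℚ) ^ aFun (φ μ).1) • Finsupp.single (φ μ) 1)
    (v : PartitionT × PartitionT →₀ ℚ) {κ : PartitionT} (hκ : ∀ ν, κ ≠ φ ν) :
    Φ v κ = 0 := by
  classical
  induction v using Finsupp.induction_linear with
  | zero => simp
  | add v w hv hw => rw [map_add, Finsupp.add_apply, hv, hw, add_zero]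
  | single μ c =>
    rw [signed_single hΦ, Finsupp.single_apply, if_neg (hκ μ).symm]

end SignedBasis

end Helpers

/-- with `V` the `ℚ`-vector space with basis the partitions, `V2` the one with
basis the bipartitions, `B` the map `B_{2n}`, `b1, b2` the maps `b_n^{(1)}, b_n^{(2)}`
(characterized by their matrix coefficients on the standard bases), and `Φ` the signed
basis map `μ ↦ (-1)^{a(φ_σ(μ))} φ_σ(μ)`, one has `Φ ∘ (b_n^{(1)} + b_n^{(2)}) = B_{2n} ∘ Φ`. -/
theorem statement0 (σ1 σ2 : ℤ) (hσ : σ1 + σ2 = 0)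
    (φ : PartitionT × PartitionT → PartitionT)
    (hφ : ∀ μ : PartitionT × PartitionT,
      betaSet (φ μ).1 0 =
        ((fun b => -1 + 2 * b) '' betaSet μ.1.1 σ1) ∪ ((fun b => 2 * b) '' betaSet μ.2.1 σ2))
    (n : ℕ) (hn : 1 ≤ n)
    (B : (PartitionT →₀ ℚ) →ₗ[ℚ] (PartitionT →₀ ℚ))
    (hB : ∀ (lam nu : PartitionT) (x : ℤ), AddHook (2 * (n : ℤ)) lam.1 nu.1 0 x →
      B (Finsupp.single lam 1) nu =
        (-1 : ℚ) ^ (betaSet lam.1 0 ∩ Set.Ioo x (x + 2 * (n : ℤ))).ncard)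
    (hB0 : ∀ lam nu : PartitionT, (¬ ∃ x : ℤ, AddHook (2 * (n : ℤ)) lam.1 nu.1 0 x) →
      B (Finsupp.single lam 1) nu = 0)
    (b1 b2 : (PartitionT × PartitionT →₀ ℚ) →ₗ[ℚ] (PartitionT × PartitionT →₀ ℚ))
    (hb1 : ∀ (μ : PartitionT × PartitionT) (ρ : PartitionT) (y : ℤ),
      AddHook (n : ℤ) μ.1.1 ρ.1 σ1 y →
      b1 (Finsupp.single μ 1) (ρ, μ.2) =
        (-1 : ℚ) ^ (betaSet μ.1.1 σ1 ∩ Set.Ioo y (y + (n : ℤ))).ncard)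
    (hb1' : ∀ (μ ν : PartitionT × PartitionT),
      (ν.2 ≠ μ.2 ∨ ¬ ∃ y : ℤ, AddHook (n : ℤ) μ.1.1 ν.1.1 σ1 y) →
      b1 (Finsupp.single μ 1) ν = 0)
    (hb2 : ∀ (μ : PartitionT × PartitionT) (ρ : PartitionT) (y : ℤ),
      AddHook (n : ℤ) μ.2.1 ρ.1 σ2 y →
      b2 (Finsupp.single μ 1) (μ.1, ρ) =
        (-1 : ℚ) ^ (betaSet μ.2.1 σ2 ∩ Set.Ioo y (y + (n : ℤ))).ncard)
    (hb2' : ∀ (μ ν : PartitionT × PartitionT),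
      (ν.1 ≠ μ.1 ∨ ¬ ∃ y : ℤ, AddHook (n : ℤ) μ.2.1 ν.2.1 σ2 y) →
      b2 (Finsupp.single μ 1) ν = 0)
    (Φ : (PartitionT × PartitionT →₀ ℚ) →ₗ[ℚ] (PartitionT →₀ ℚ))
    (hΦ : ∀ μ : PartitionT × PartitionT,
      Φ (Finsupp.single μ 1) = ((-1 : ℚ) ^ aFun (φ μ).1) • Finsupp.single (φ μ) 1) :
    Φ ∘ₗ (b1 + b2) = B ∘ₗ Φ := by
  have hφ' : ∀ μ : PartitionT × PartitionT,
      Interleaves (betaSet (φ μ).1 0) (betaSet μ.1.1 σ1) (betaSet μ.2.1 σ2) := hφ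
  have hinj := phi_injective hφ'
  refine Finsupp.lhom_ext' fun μ => LinearMap.ext_ring ?_
  simp only [LinearMap.comp_apply, Finsupp.lsingle_apply, LinearMap.add_apply]
  rw [hΦ μ, map_smul]
  ext κ
  rw [Finsupp.smul_apply, smul_eq_mul]
  by_cases hk : ∃ x : ℤ, AddHook (2 * (n : ℤ)) (φ μ).1 κ.1 0 x
  · obtain ⟨x, hx⟩ := hk
    rw [hB _ _ x hx]
    rcases addHook_phi_cases hφ' hx with ⟨y, ρ, rfl, hρ, rfl⟩ | ⟨y, ρ, rfl, hρ, rfl⟩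
    · rw [signed_apply hinj hΦ, Finsupp.add_apply, hb1 μ ρ y hρ,
        hb2' μ (ρ, μ.2) (Or.inl (hρ.ne hn)), add_zero,
        ← sign_addHook (φ μ).2 (φ (ρ, μ.2)).2 hx, ncard_odd (hφ' μ)]
    · rw [signed_apply hinj hΦ, Finsupp.add_apply, hb2 μ ρ y hρ,
        hb1' μ (μ.1, ρ) (Or.inl (hρ.ne hn)), zero_add,
        ← sign_addHook (φ μ).2 (φ (μ.1, ρ)).2 hx, ncard_even (hφ' μ)]
  · rw [hB0 _ _ hk, mul_zero]
    by_cases hr : ∃ ν, κ = φ ν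
    · obtain ⟨⟨ν1, ν2⟩, rfl⟩ := hr
      have z1 : b1 (Finsupp.single μ 1) (ν1, ν2) = 0 := by
        refine hb1' μ _ ?_
        by_contra hcon
        push Not at hcon
        obtain ⟨rfl, y, hy⟩ := hcon
        exact hk ⟨_, addHook_fst hφ' hy⟩
      have z2 : b2 (Finsupp.single μ 1) (ν1, ν2) = 0 := by
        refine hb2' μ _ ?_
        by_contra hcon
        push Not at hcon
        obtain ⟨rfl, y, hy⟩ := hcon
        exact hk ⟨_, addHook_snd hφ' hy⟩
      rw [signed_apply hinj hΦ, Finsupp.add_apply, z1, z2, add_zero, mul_zero]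
    · push Not at hr
      exact signed_apply_notMem hΦ _ hr
end

section
/- Let lambda be a partition and (mu, sigma) its 2-quotient data, so beta_0(lambda) = (-1 + 2*beta_{sigma_1}(mu^1)) ⊔ (2*beta_{sigma_2}(mu^2)). Let n >= 1 and suppose nu is obtained from (lambda,0) by adding the 2n-hook (x, x+2n), i.e. x ∈ beta_0(lambda), x+2n ∉ beta_0(lambda) and beta_0(nu) = (beta_0(lambda) ∖ {x}) ∪ {x+2n}. (i) If x = 2y - 1 is odd, then y ∈ beta_{sigma_1}(mu^1), y + n ∉ beta_{sigma_1}(mu^1), the 2-quotient data of nu is ((rho, mu^2), sigma) where beta_{sigma_1}(rho) = (beta_{sigma_1}(mu^1) ∖ {y}) ∪ {y+n}, and #(beta_0(lambda) ∩ (x, x+2n)) = #(beta_{sigma_1}(mu^1) ∩ (y, y+n)) + #((2*beta_{sigma_2}(mu^2)) ∩ (x, x+2n)). (ii) If x = 2y is even, then y ∈ beta_{sigma_2}(mu^2), y + n ∉ beta_{sigma_2}(mu^2), the 2-quotient data of nu is ((mu^1, rho), sigma) where beta_{sigma_2}(rho) = (beta_{sigma_2}(mu^2) ∖ {y}) ∪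 {y+n}, and #(beta_0(lambda) ∩ (x, x+2n)) = #((-1 + 2*beta_{sigma_1}(mu^1)) ∩ (x, x+2n)) + #(beta_{sigma_2}(mu^2) ∩ (y, y+n)). All intervals are open. -/
/-- Moving one bead `y` of the beta-set of a charged partition to a higher free position
`y + n` yields the beta-set of a partition with the same charge. -/
theorem exists_partition_of_move (mu : ℕ → ℕ) (hmu : IsPartition mu) (s y : ℤ) (n : ℕ)
    (hn : 1 ≤ n) (hy : y ∈ betaSet mu s) (hyn : y + (n : ℤ) ∉ betaSet mu s) :
    ∃ ρ : ℕ → ℕ, IsPartition ρ ∧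
      betaSet ρ s = (betaSet mu s \ {y}) ∪ {y + (n : ℤ)} := by
  classical
  obtain ⟨hanti, N, hN⟩ := hmu
  obtain ⟨j, hj⟩ := hy
  have hfree : ∀ i : ℕ, y + (n : ℤ) ≠ (mu i : ℤ) + s - i := fun i h => hyn ⟨i, h⟩
  have hex : ∃ k : ℕ, (mu k : ℤ) + s - k < y + n := ⟨j, by omega⟩
  obtain ⟨k, hk, hkmin⟩ : ∃ k : ℕ, (mu k : ℤ) + s - k < y + n ∧
      ∀ i < k, y + (n : ℤ) < (mu i : ℤ) + s - i := by
    refine ⟨Nat.find hex, Nat.find_spec hex, fun i hi => ?_⟩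
    have h1 := Nat.find_min hex hi
    have h2 := hfree i
    omega
  have hkj : k ≤ j := by
    by_contra h
    have := hkmin j (by omega)
    omega
  obtain ⟨m, hm⟩ : ∃ m : ℕ, (m : ℤ) = y + n - s + k :=
    ⟨(y + n - s + k).toNat, Int.toNat_of_nonneg (by omega)⟩
  obtain ⟨ρ, hρ⟩ : ∃ ρ : ℕ → ℕ, ∀ i, ρ i =
      if i < k then mu i else if i = k then m else if i ≤ j then mu (i - 1) + 1 else mu i :=
    ⟨_, fun _ => rfl⟩
  have hρ1 : ∀ i, i < k → ρ i = mu i := fun i h => by rw [hρ, if_pos h]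
  have hρ2 : ρ k = m := by rw [hρ, if_neg (by omega), if_pos rfl]
  have hρ3 : ∀ i, k ≤ i → i < j → ρ (i + 1) = mu i + 1 := fun i h h' => by
    rw [hρ, if_neg (by omega), if_neg (by omega), if_pos (by omega), Nat.add_sub_cancel]
  have hρ4 : ∀ i, j < i → ρ i = mu i := fun i h => by
    rw [hρ, if_neg (by omega), if_neg (by omega), if_neg (by omega)]
  refine ⟨ρ, ⟨antitone_nat_of_succ_le fun i => ?_, max N (j + 1), fun i hi => ?_⟩, ?_⟩
  · have hstep : mu (i + 1) ≤ mu i := hanti (Nat.le_succ i)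
    rcases lt_trichotomy (i + 1) k with h | h | h
    · rw [hρ1 _ h, hρ1 i (by omega)]
      exact hstep
    · have h1 := hkmin i (by omega)
      rw [h, hρ2, hρ1 i (by omega)]
      omega
    · rcases lt_or_ge i j with h' | h'
      · rw [hρ3 i (by omega) h']
        rcases Nat.eq_or_lt_of_le (show k ≤ i by omega) with rfl | h''
        · rw [hρ2]
          omega
        · obtain ⟨l, rfl⟩ : ∃ l, i = l + 1 := ⟨i - 1, by omega⟩
          rw [hρ3 l (by omega) (by omega)]
          have : mu (l + 1) ≤ mu l := hanti (Nat.le_succ l)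
          omega
      · rw [hρ4 (i + 1) (by omega)]
        rcases Nat.eq_or_lt_of_le h' with rfl | h''
        · rcases Nat.eq_or_lt_of_le hkj with rfl | h3
          · rw [hρ2]
            omega
          · obtain ⟨l, rfl⟩ : ∃ l, j = l + 1 := ⟨j - 1, by omega⟩
            rw [hρ3 l (by omega) (by omega)]
            have : mu (l + 1) ≤ mu l := hanti (Nat.le_succ l)
            omega
        · rw [hρ4 i h'']
          exact hstep
  · rw [hρ4 i (by omega)]
    exact hN i (by omega)
  · have hinj : ∀ i, i ≠ j → (mu i : ℤ) + s - i ≠ y := by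
      intro i hi
      rcases lt_or_gt_of_ne hi with h | h
      · have := hanti h.le
        omega
      · have := hanti h.le
        omega
    ext z
    simp only [Set.mem_union, Set.mem_sdiff, Set.mem_singleton_iff]
    constructor
    · rintro ⟨i, rfl⟩
      rcases lt_trichotomy i k with h | rfl | h
      · rw [hρ1 i h]
        exact Or.inl ⟨⟨i, rfl⟩, hinj i (by omega)⟩
      · rw [hρ2]
        right
        omega
      · left
        rcases lt_or_ge j i with h' | h'
        · rw [hρ4 i h']
          exact ⟨⟨i, rfl⟩, hinj i (by omega)⟩
        · obtain ⟨l, rfl⟩ : ∃ l, i = l + 1 := ⟨i - 1, by omega⟩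
          have hl := hinj l (by omega)
          rw [hρ3 l (by omega) (by omega)]
          exact ⟨⟨l, by push_cast; ring⟩, by push_cast; omega⟩
    · rintro (⟨⟨i, rfl⟩, hi⟩ | rfl)
      · rcases lt_or_ge i k with h | h
        · exact ⟨i, by rw [hρ1 i h]⟩
        · rcases lt_trichotomy i j with h' | rfl | h'
          · exact ⟨i + 1, by rw [hρ3 i h h']; push_cast; ring⟩
          · exact absurd hj.symm hi
          · exact ⟨i, by rw [hρ4 i h']⟩
      · exact ⟨k, by rw [hρ2]; omega⟩

/-- Interleaving of two integer sets as odd and even elements: membership on the odd runner. -/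
theorem mem_interleave_odd (A B : Set ℤ) (b : ℤ) :
    2 * b - 1 ∈ ((fun b => -1 + 2 * b) '' A) ∪ ((fun b => 2 * b) '' B) ↔ b ∈ A := by
  constructor
  · rintro (⟨a, ha, h⟩ | ⟨a, ha, h⟩)
    · obtain rfl : a = b := by
        simp only at h
        omega
      exact ha
    · simp only at h
      omega
  · exact fun h => Or.inl ⟨b, h, by ring⟩

/-- Interleaving of two integer sets as odd and even elements: membership on the even runner. -/
theorem mem_interleave_even (A B : Set ℤ) (b : ℤ) :
    2 * b ∈ ((fun b => -1 + 2 * b) '' A) ∪ ((fun b => 2 * b) '' B) ↔ b ∈ B := by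
  constructor
  · rintro (⟨a, ha, h⟩ | ⟨a, ha, h⟩)
    · simp only at h
      omega
    · obtain rfl : a = b := by
        simp only at h
        omega
      exact ha
  · exact fun h => Or.inr ⟨b, h, rfl⟩

theorem ext_of_parity {S T : Set ℤ} (hodd : ∀ b, 2 * b - 1 ∈ S ↔ 2 * b - 1 ∈ T)
    (heven : ∀ b, 2 * b ∈ S ↔ 2 * b ∈ T) : S = T := by
  ext z
  obtain ⟨b, rfl | rfl⟩ : ∃ b, z = 2 * b ∨ z = 2 * b - 1 := ⟨(z + 1) / 2, by omega⟩
  · exact heven b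
  · exact hodd b

theorem ncard_interleave_inter_Ioo (A B : Set ℤ) (u v : ℤ) :
    ((((fun b => -1 + 2 * b) '' A) ∪ ((fun b => 2 * b) '' B)) ∩ Set.Ioo u v).ncard =
      (((fun b => -1 + 2 * b) '' A) ∩ Set.Ioo u v).ncard +
        (((fun b => 2 * b) '' B) ∩ Set.Ioo u v).ncard := by
  rw [Set.union_inter_distrib_right]
  refine Set.ncard_union_eq ?_ ((Set.finite_Ioo u v).subset Set.inter_subset_right)
    ((Set.finite_Ioo u v).subset Set.inter_subset_right)
  rw [Set.disjoint_left]
  rintro _ ⟨⟨a, _, rfl⟩, _⟩ ⟨⟨b, _, h⟩, _⟩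
  simp only at h
  omega

/-- On the runner `b ↦ 2b + c` an open interval with endpoints on the runner contains as many
beads as the corresponding interval of the quotient. -/
theorem ncard_image_inter_Ioo (f : ℤ → ℤ) (c : ℤ) (hf : ∀ b, f b = 2 * b + c) (A : Set ℤ)
    (y n : ℤ) :
    ((f '' A) ∩ Set.Ioo (2 * y + c) (2 * y + c + 2 * n)).ncard =
      (A ∩ Set.Ioo y (y + n)).ncard := by
  have hinj : Function.Injective f := fun a b h => by
    rw [hf, hf] at h
    omega
  rw [← Set.ncard_image_of_injective (A ∩ Set.Ioo y (y + n)) hinj]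
  congr 1
  ext z
  constructor
  · rintro ⟨⟨a, ha, rfl⟩, h1, h2⟩
    rw [hf] at h1 h2
    exact ⟨a, ⟨ha, by omega, by omega⟩, rfl⟩
  · rintro ⟨a, ⟨ha, h1, h2⟩, rfl⟩
    refine ⟨⟨a, ha, rfl⟩, ?_, ?_⟩ <;> rw [hf] <;> omega

/-- behaviour of the 2-quotient data under addition of a `2n`-hook. -/
theorem statement1 (lam mu1 mu2 nu : ℕ → ℕ)
    (hlam : IsPartition lam) (hmu1 : IsPartition mu1) (hmu2 : IsPartition mu2)
    (hnu : IsPartition nu) (s1 s2 : ℤ)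
    (hq : betaSet lam 0 =
      ((fun b => -1 + 2 * b) '' betaSet mu1 s1) ∪ ((fun b => 2 * b) '' betaSet mu2 s2))
    (n : ℕ) (hn : 1 ≤ n) (x : ℤ)
    (hhook : AddHook (2 * (n : ℤ)) lam nu 0 x) :
    (∀ y : ℤ, x = 2 * y - 1 →
      y ∈ betaSet mu1 s1 ∧ y + (n : ℤ) ∉ betaSet mu1 s1 ∧
      (∃ ρ : ℕ → ℕ, IsPartition ρ ∧
        betaSet ρ s1 = (betaSet mu1 s1 \ {y}) ∪ {y + (n : ℤ)} ∧
        betaSet nu 0 =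
          ((fun b => -1 + 2 * b) '' betaSet ρ s1) ∪ ((fun b => 2 * b) '' betaSet mu2 s2)) ∧
      (betaSet lam 0 ∩ Set.Ioo x (x + 2 * (n : ℤ))).ncard =
        (betaSet mu1 s1 ∩ Set.Ioo y (y + (n : ℤ))).ncard +
          (((fun b => 2 * b) '' betaSet mu2 s2) ∩ Set.Ioo x (x + 2 * (n : ℤ))).ncard) ∧
    (∀ y : ℤ, x = 2 * y →
      y ∈ betaSet mu2 s2 ∧ y + (n : ℤ) ∉ betaSet mu2 s2 ∧
      (∃ ρ : ℕ → ℕ, IsPartition ρ ∧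
        betaSet ρ s2 = (betaSet mu2 s2 \ {y}) ∪ {y + (n : ℤ)} ∧
        betaSet nu 0 =
          ((fun b => -1 + 2 * b) '' betaSet mu1 s1) ∪ ((fun b => 2 * b) '' betaSet ρ s2)) ∧
      (betaSet lam 0 ∩ Set.Ioo x (x + 2 * (n : ℤ))).ncard =
        (((fun b => -1 + 2 * b) '' betaSet mu1 s1) ∩ Set.Ioo x (x + 2 * (n : ℤ))).ncard +
          (betaSet mu2 s2 ∩ Set.Ioo y (y + (n : ℤ))).ncard) := by
  obtain ⟨hx, hxn, hnu'⟩ := hhook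
  rw [hnu']
  rw [hq] at hx hxn ⊢
  constructor
  · rintro y rfl
    have hxn' : 2 * y - 1 + 2 * (n : ℤ) = 2 * (y + n) - 1 := by ring
    rw [mem_interleave_odd] at hx
    rw [hxn', mem_interleave_odd] at hxn
    obtain ⟨ρ, hρ, hβ⟩ := exists_partition_of_move mu1 hmu1 s1 y n hn hx hxn
    refine ⟨hx, hxn, ⟨ρ, hρ, hβ, ?_⟩, ?_⟩
    · rw [hβ, hxn']
      refine ext_of_parity (fun b => ?_) (fun b => ?_)
      · rw [mem_interleave_odd, Set.mem_union, Set.mem_sdiff, mem_interleave_odd]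
        simp [or_comm]
      · rw [mem_interleave_even, Set.mem_union, Set.mem_sdiff, mem_interleave_even]
        simp only [Set.mem_singleton_iff]
        have h1 : 2 * b ≠ 2 * y - 1 := by omega
        have h2 : 2 * b ≠ 2 * (y + n) - 1 := by omega
        tauto
    · rw [ncard_interleave_inter_Ioo]
      congr 1
      exact ncard_image_inter_Ioo _ (-1) (fun b => by ring) _ y n
  · rintro y rfl
    have hxn' : 2 * y + 2 * (n : ℤ) = 2 * (y + n) := by ring
    rw [mem_interleave_even] at hx
    rw [hxn', mem_interleave_even] at hxn
    obtain ⟨ρ, hρ, hβ⟩ := exists_partition_of_move mu2 hmu2 s2 y n hn hx hxn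
    refine ⟨hx, hxn, ⟨ρ, hρ, hβ, ?_⟩, ?_⟩
    · rw [hβ, hxn']
      refine ext_of_parity (fun b => ?_) (fun b => ?_)
      · rw [mem_interleave_odd, Set.mem_union, Set.mem_sdiff, mem_interleave_odd]
        simp only [Set.mem_singleton_iff]
        have h1 : 2 * b - 1 ≠ 2 * y := by omega
        have h2 : 2 * b - 1 ≠ 2 * (y + n) := by omega
        tauto
      · rw [mem_interleave_even, Set.mem_union, Set.mem_sdiff, mem_interleave_even]
        simp [or_comm]
    · rw [ncard_interleave_inter_Ioo]
      congr 1
      simpa using ncard_image_inter_Ioo (fun b => 2 * b) 0 (fun b => by ring) (betaSet mu2 s2) y n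
end

section
/- Let lambda be a partition and (mu, sigma) its 2-quotient data. Let n >= 1 and suppose nu is obtained from (lambda,0) by adding the 2n-hook (x, x+2n), i.e. x ∈ beta_0(lambda), x+2n ∉ beta_0(lambda) and beta_0(nu) = (beta_0(lambda) ∖ {x}) ∪ {x+2n}. Define b(lambda,x) = #((2*beta_{sigma_2}(mu^2)) ∩ (x, x+2n)) if x is odd, and b(lambda,x) = #((-1 + 2*beta_{sigma_1}(mu^1)) ∩ (x, x+2n)) if x is even (open intervals). Then a(nu) - a(lambda) ≡ b(lambda,x) (mod 2). -/
/-- Twice the sum of `min b c` over unordered pairs of distinct elements of `B`, written as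
the sum over all ordered pairs minus the diagonal. -/
def pairMin (B : Finset ℤ) : ℤ := ∑ b ∈ B, ∑ c ∈ B, min b c - ∑ b ∈ B, b

lemma pairMin_insert (C : Finset ℤ) (x : ℤ) (hx : x ∉ C) :
    pairMin (insert x C) = pairMin C + 2 * ∑ c ∈ C, min x c := by
  unfold pairMin
  simp only [Finset.sum_insert hx, Finset.sum_add_distrib, min_self]
  have h : ∑ b ∈ C, min b x = ∑ b ∈ C, min x b :=
    Finset.sum_congr rfl fun b _ => min_comm _ _
  rw [h]
  ring

/-- The first `N` elements of `β_0(f)`, in decreasing order. -/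
def betaTrunc (f : ℕ → ℕ) (N : ℕ) : Finset ℤ :=
  (Finset.range N).image fun i => (f i : ℤ) - i

lemma pairMin_betaTrunc {f : ℕ → ℕ} (hf : Antitone f) (N : ℕ) :
    pairMin (betaTrunc f N) = 2 * ∑ i ∈ Finset.range N, (i : ℤ) * ((f i : ℤ) - i) := by
  have hlt : ∀ i j : ℕ, i < j → (f j : ℤ) - j < (f i : ℤ) - i := by
    intro i j hij
    have := hf hij.le
    omega
  induction N with
  | zero => simp [pairMin, betaTrunc]
  | succ N ih =>
    have hins : betaTrunc f (N + 1) = insert ((f N : ℤ) - N) (betaTrunc f N) := by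
      simp [betaTrunc, Finset.range_add_one, Finset.image_insert]
    have hbig : ∀ c ∈ betaTrunc f N, (f N : ℤ) - N < c := by
      intro c hc
      obtain ⟨i, hi, rfl⟩ := Finset.mem_image.1 hc
      exact hlt i N (Finset.mem_range.1 hi)
    have hcard : (betaTrunc f N).card = N := by
      rw [betaTrunc, Finset.card_image_of_injective, Finset.card_range]
      intro i j hij
      rcases lt_trichotomy i j with h | h | h
      · exact absurd hij (hlt i j h).ne'
      · exact h
      · exact absurd hij (hlt j i h).ne
    rw [hins, pairMin_insert _ _ fun h => (hbig _ h).ne rfl, ih, Finset.sum_range_succ,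
      Finset.sum_congr rfl fun c hc => min_eq_left (hbig c hc).le, Finset.sum_const, hcard,
      nsmul_eq_mul]
    ring

lemma mem_betaTrunc {f : ℕ → ℕ} {N : ℕ} (hN : ∀ i, N ≤ i → f i = 0) (z : ℤ) :
    z ∈ betaTrunc f N ↔ z ∈ betaSet f 0 ∧ -(N : ℤ) < z := by
  simp only [betaTrunc, Finset.mem_image, Finset.mem_range, betaSet, Set.mem_ofPred_eq]
  constructor
  · rintro ⟨i, hi, rfl⟩
    exact ⟨⟨i, by ring⟩, by omega⟩
  · rintro ⟨⟨i, rfl⟩, h⟩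
    refine ⟨i, ?_, by ring⟩
    by_contra hi
    have := hN i (by omega)
    omega

lemma two_mul_aFun {f : ℕ → ℕ} (hf : Antitone f) {N : ℕ} (hN : ∀ i, N ≤ i → f i = 0) :
    2 * (aFun f : ℤ) = pairMin (betaTrunc f N) + 2 * ∑ i ∈ Finset.range N, (i : ℤ) * i := by
  have h : aFun f = ∑ i ∈ Finset.range N, i * f i :=
    tsum_eq_sum fun i hi => by rw [hN i (by simpa using hi), mul_zero]
  rw [h, pairMin_betaTrunc hf, ← mul_add, ← Finset.sum_add_distrib]
  push_cast
  congr 1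
  exact Finset.sum_congr rfl fun i _ => by ring

/-- The exact change of `a` under replacing `x` by `y` in the beta-set. -/
lemma aFun_sub {f g : ℕ → ℕ} (hf : Antitone f) (hg : Antitone g) {N : ℕ}
    (hfN : ∀ i, N ≤ i → f i = 0) (hgN : ∀ i, N ≤ i → g i = 0) {x y : ℤ}
    (hxN : -(N : ℤ) < x) (hxy : x < y) (hx : x ∈ betaSet f 0) (hy : y ∉ betaSet f 0)
    (hfg : betaSet g 0 = (betaSet f 0 \ {x}) ∪ {y}) :
    (aFun g : ℤ) - aFun f = ∑ c ∈ (betaTrunc f N).erase x, (min y c - min x c) := by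
  have hB : insert x ((betaTrunc f N).erase x) = betaTrunc f N :=
    Finset.insert_erase ((mem_betaTrunc hfN x).2 ⟨hx, hxN⟩)
  have hB' : betaTrunc g N = insert y ((betaTrunc f N).erase x) := by
    ext z
    rw [mem_betaTrunc hgN, hfg, Finset.mem_insert, Finset.mem_erase, mem_betaTrunc hfN]
    simp only [Set.mem_union, Set.mem_sdiff, Set.mem_singleton_iff]
    constructor
    · tauto
    · rintro (rfl | h)
      · exact ⟨Or.inr rfl, hxN.trans hxy⟩
      · tauto
  have hyC : y ∉ (betaTrunc f N).erase x := fun h =>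
    hy ((mem_betaTrunc hfN y).1 (Finset.mem_of_mem_erase h)).1
  have h1 := two_mul_aFun hf hfN
  have h2 := two_mul_aFun hg hgN
  rw [← hB, pairMin_insert _ _ (Finset.notMem_erase x _)] at h1
  rw [hB', pairMin_insert _ _ hyC] at h2
  rw [Finset.sum_sub_distrib]
  linarith

/-- The elements of `β_0(f)` in `(x, x + 2n)` of parity different from `x` give the parity
of the change of `a`. -/
lemma aFun_sub_modEq {f g : ℕ → ℕ} (hf : IsPartition f) (hg : IsPartition g) {n : ℕ}
    (hn : 1 ≤ n) {x : ℤ} (h : AddHook (2 * (n : ℤ)) f g 0 x) :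
    (aFun g : ℤ) - aFun f ≡
      ((({z | z ∈ betaSet f 0 ∧ ¬ (2 : ℤ) ∣ z - x} ∩ Set.Ioo x (x + 2 * (n : ℤ))).ncard : ℕ) : ℤ)
        [ZMOD 2] := by
  obtain ⟨hf, N₁, hN₁⟩ := hf
  obtain ⟨hg, N₂, hN₂⟩ := hg
  obtain ⟨hx, hy, hfg⟩ := h
  obtain ⟨N, h₁, h₂, hxN⟩ : ∃ N : ℕ, N₁ ≤ N ∧ N₂ ≤ N ∧ -(N : ℤ) < x :=
    ⟨N₁ + N₂ + x.natAbs + 1, by omega, by omega, by omega⟩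
  have hfN : ∀ i, N ≤ i → f i = 0 := fun i hi => hN₁ i (h₁.trans hi)
  rw [aFun_sub hf hg hfN (fun i hi => hN₂ i (h₂.trans hi)) hxN (by omega) hx hy hfg]
  have hset : {z | z ∈ betaSet f 0 ∧ ¬ (2 : ℤ) ∣ z - x} ∩ Set.Ioo x (x + 2 * (n : ℤ)) =
      (((betaTrunc f N).erase x).filter
        fun z => ¬ (2 : ℤ) ∣ z - x ∧ x < z ∧ z < x + 2 * (n : ℤ) : Finset ℤ) := by
    ext z
    simp only [Set.mem_inter_iff, Set.mem_ofPred_eq, Set.mem_Ioo, Finset.coe_filter,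
      Finset.mem_erase, mem_betaTrunc hfN]
    constructor
    · rintro ⟨⟨h1, h2⟩, h3, h4⟩
      exact ⟨⟨h3.ne', h1, hxN.trans h3⟩, h2, h3, h4⟩
    · rintro ⟨⟨-, h1, -⟩, h2, h3, h4⟩
      exact ⟨⟨h1, h2⟩, h3, h4⟩
  rw [hset, Set.ncard_coe_finset, Finset.card_filter, Int.modEq_iff_dvd]
  push_cast
  rw [← Finset.sum_sub_distrib]
  refine Finset.dvd_sum fun c _ => ?_
  split_ifs with hc <;> omega

/-- the parity of `a(ν) - a(λ)` when `ν` is obtained from `λ` by adding a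
`2n`-hook `(x, x + 2n)`. -/
theorem statement2 (lam mu1 mu2 nu : ℕ → ℕ)
    (hlam : IsPartition lam) (hmu1 : IsPartition mu1) (hmu2 : IsPartition mu2)
    (hnu : IsPartition nu) (s1 s2 : ℤ)
    (hq : betaSet lam 0 =
      ((fun b => -1 + 2 * b) '' betaSet mu1 s1) ∪ ((fun b => 2 * b) '' betaSet mu2 s2))
    (n : ℕ) (hn : 1 ≤ n) (x : ℤ)
    (hhook : AddHook (2 * (n : ℤ)) lam nu 0 x) :
    ((aFun nu : ℤ) - (aFun lam : ℤ)) ≡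
      (if Odd x
        then ((((fun b => 2 * b) '' betaSet mu2 s2) ∩ Set.Ioo x (x + 2 * (n : ℤ))).ncard : ℤ)
        else ((((fun b => -1 + 2 * b) '' betaSet mu1 s1) ∩
            Set.Ioo x (x + 2 * (n : ℤ))).ncard : ℤ)) [ZMOD 2] := by
  convert aFun_sub_modEq hlam hnu hn hhook using 1
  -- It remains to identify the part of the beta-set of parity opposite to that of `x`.
  split_ifs with hx
  · congr 3
    ext z
    rw [hq]
    simp only [Set.mem_ofPred_eq, Set.mem_union, Set.mem_image]
    obtain ⟨k, rfl⟩ := hx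
    constructor
    · rintro ⟨b, hb, rfl⟩
      exact ⟨Or.inr ⟨b, hb, rfl⟩, by omega⟩
    · rintro ⟨⟨b, hb, rfl⟩ | h, h2⟩
      · omega
      · exact h
  · congr 3
    ext z
    rw [hq]
    simp only [Set.mem_ofPred_eq, Set.mem_union, Set.mem_image]
    obtain ⟨k, rfl⟩ := Int.not_odd_iff_even.1 hx
    constructor
    · rintro ⟨b, hb, rfl⟩
      exact ⟨Or.inl ⟨b, hb, rfl⟩, by omega⟩
    · rintro ⟨h | ⟨b, hb, rfl⟩, h2⟩
      · exact h
      · omega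
end

section
/- Let lambda be a partition and suppose nu is obtained from (lambda,0) by adding a 2-hook (x, x+2), i.e. x ∈ beta_0(lambda), x+2 ∉ beta_0(lambda) and beta_0(nu) = (beta_0(lambda) ∖ {x}) ∪ {x+2}. If x+1 ∉ beta_0(lambda), then nu is obtained from lambda by increasing a single part lambda_i by 2 (all other parts unchanged), and a(nu) - a(lambda) is even. If x+1 ∈ beta_0(lambda), then nu is obtained from lambda by increasing two consecutive parts lambda_i and lambda_{i+1} with lambda_{i+1} = lambda_i each by 1, and a(nu) - a(lambda) is odd. -/
theorem eq_of_betaSet_eq {f g : ℕ → ℕ} (hf : Antitone f) (hg : Antitone g)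
    (h : betaSet f 0 = betaSet g 0) : f = g := by
  -- The negated beta-numbers `i - f i` are strictly increasing, hence determined by their range.
  have key : ∀ {f : ℕ → ℕ}, Antitone f → StrictMono (fun i : ℕ => (i : ℤ) - f i) := by
    intro f hf a b hab
    have := hf hab.le
    simp only
    omega
  have hr : Set.range (fun i : ℕ => (i : ℤ) - f i) = Set.range (fun i : ℕ => (i : ℤ) - g i) := by
    have hmem : ∀ (f : ℕ → ℕ) (y : ℤ),
        y ∈ Set.range (fun i : ℕ => (i : ℤ) - f i) ↔ -y ∈ betaSet f 0 := by
      intro f y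
      constructor
      · rintro ⟨i, rfl⟩
        exact ⟨i, by ring⟩
      · rintro ⟨i, hi⟩
        exact ⟨i, by simp only; omega⟩
    ext y
    rw [hmem, hmem, h]
  have hfg := ((key hf).range_inj (key hg)).1 hr
  funext i
  have := congrFun hfg i
  omega

theorem aFun_add {f g : ℕ → ℕ} (hf : f.support.Finite) (hg : g.support.Finite) :
    aFun (f + g) = aFun f + aFun g := by
  have hs : ∀ {f : ℕ → ℕ}, f.support.Finite → Summable (fun i => i * f i) := fun hf =>
    summable_of_hasFiniteSupport (hf.subset fun i hi => right_ne_zero_of_mul hi)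
  simp only [aFun, Pi.add_apply, mul_add]
  exact (hs hf).tsum_add (hs hg)

theorem aFun_single (k c : ℕ) : aFun (Pi.single k c) = k * c := by
  unfold aFun
  rw [tsum_eq_single k]
  · simp
  · intro j hj
    simp [hj]

theorem finite_support_single (k c : ℕ) : (Pi.single k c : ℕ → ℕ).support.Finite :=
  (Set.finite_singleton k).subset Pi.support_single_subset

theorem IsPartition.finite_support {f : ℕ → ℕ} (hf : IsPartition f) : f.support.Finite := by
  obtain ⟨N, hN⟩ := hf.2
  exact (Set.finite_lt_nat N).subset fun i hi => not_le.1 fun h => hi (hN i h)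

/-- When `x + 1` is not a beta-number, adding the hook `(x, x + 2)` adds `2` to one part. -/
theorem eq_add_single_of_notMem {lam nu : ℕ → ℕ} (hlam : Antitone lam) (hnu : Antitone nu)
    {x : ℤ} (hhook : AddHook 2 lam nu 0 x) (hx : x + 1 ∉ betaSet lam 0) :
    ∃ k, nu = lam + Pi.single k 2 := by
  obtain ⟨⟨k, hk⟩, hx2, hb⟩ := hhook
  refine ⟨k, eq_of_betaSet_eq hnu ?_ ?_⟩
  · refine antitone_nat_of_succ_le fun n => ?_
    have h0 : lam (n + 1) ≤ lam n := hlam n.le_succ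
    have h1 : x + 1 ≠ lam n + 0 - n := fun h => hx ⟨n, h⟩
    have h2 : x + 2 ≠ lam n + 0 - n := fun h => hx2 ⟨n, h⟩
    simp only [Pi.add_apply, Pi.single_apply]
    split_ifs with h3 h4 <;> subst_vars <;> omega
  · rw [hb]
    ext y
    constructor
    · rintro (⟨⟨j, hj⟩, hy⟩ | hy)
      · have hjk : j ≠ k := by
          rintro rfl
          exact hy (hj.trans hk.symm)
        exact ⟨j, by simpa [hjk] using hj⟩
      · have hy : y = x + 2 := hy
        exact ⟨k, by simp; omega⟩
    · rintro ⟨j, hj⟩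
      by_cases hjk : j = k
      · subst hjk
        right
        simp at hj ⊢
        omega
      · simp [hjk] at hj
        refine Or.inl ⟨⟨j, by omega⟩, fun hy => hjk ?_⟩
        have hy : y = x := hy
        -- Distinct indices have distinct beta-numbers.
        rcases lt_or_gt_of_ne hjk with h | h
        · have := hlam h.le
          omega
        · have := hlam h.le
          omega

/-- When `x + 1` is a beta-number, adding the hook `(x, x + 2)` adds `1` to each of two equal
consecutive parts. -/
theorem eq_add_single_of_mem {lam nu : ℕ → ℕ} (hlam : Antitone lam) (hnu : Antitone nu)
    {x : ℤ} (hhook : AddHook 2 lam nu 0 x) (hx : x + 1 ∈ betaSet lam 0) :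
    ∃ i, lam (i + 1) = lam i ∧ nu = lam + (Pi.single i 1 + Pi.single (i + 1) 1) := by
  obtain ⟨⟨k, hk⟩, hx2, hb⟩ := hhook
  obtain ⟨i, hi⟩ := hx
  obtain rfl : k = i + 1 := by
    rcases lt_or_ge i k with h | h
    · have := hlam h.le
      omega
    · have := hlam h
      omega
  have heq : lam (i + 1) = lam i := by omega
  refine ⟨i, heq, eq_of_betaSet_eq hnu ?_ ?_⟩
  · refine antitone_nat_of_succ_le fun n => ?_
    have h0 : lam (n + 1) ≤ lam n := hlam n.le_succ
    have h2 : x + 2 ≠ lam n + 0 - n := fun h => hx2 ⟨n, h⟩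
    simp only [Pi.add_apply, Pi.single_apply]
    split_ifs <;> subst_vars <;> omega
  · rw [hb]
    ext y
    constructor
    · rintro (⟨⟨j, hj⟩, hy⟩ | hy)
      · have hjk : j ≠ i + 1 := by
          rintro rfl
          exact hy (hj.trans hk.symm)
        by_cases hji : j = i
        · -- The old beta-number `x + 1` of index `i` is the new one of index `i + 1`.
          subst hji
          exact ⟨j + 1, by simp; omega⟩
        · exact ⟨j, by simpa [hjk, hji] using hj⟩
      · have hy : y = x + 2 := hy
        exact ⟨i, by simp; omega⟩
    · rintro ⟨j, hj⟩
      by_cases hji : j = i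
      · subst hji
        right
        simp at hj ⊢
        omega
      by_cases hjk : j = i + 1
      · subst hjk
        simp at hj
        refine Or.inl ⟨⟨i, by omega⟩, fun hy => ?_⟩
        have hy : y = x := hy
        omega
      · simp [hjk, hji] at hj
        refine Or.inl ⟨⟨j, by omega⟩, fun hy => hjk ?_⟩
        have hy : y = x := hy
        rcases lt_or_gt_of_ne hjk with h | h
        · have := hlam h.le
          omega
        · have := hlam h.le
          omega


/-- adding a `2`-hook either increases a single part by `2` (vertical `2`-hook,
with `a(ν) - a(λ)` even) or increases two equal consecutive parts by `1` each
(horizontal `2`-hook, with `a(ν) - a(λ)` odd), according to whether `x + 1` lies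
in `β_0(λ)` or not. Parts are `0`-indexed: `lam i` is the part `λ_{i+1}`. -/
theorem statement3 (lam nu : ℕ → ℕ) (hlam : IsPartition lam) (hnu : IsPartition nu)
    (x : ℤ) (hhook : AddHook 2 lam nu 0 x) :
    (x + 1 ∉ betaSet lam 0 →
      (∃ i : ℕ, nu i = lam i + 2 ∧ ∀ j : ℕ, j ≠ i → nu j = lam j) ∧
      Even ((aFun nu : ℤ) - (aFun lam : ℤ))) ∧
    (x + 1 ∈ betaSet lam 0 →
      (∃ i : ℕ, lam (i + 1) = lam i ∧ nu i = lam i + 1 ∧ nu (i + 1) = lam (i + 1) + 1 ∧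
        ∀ j : ℕ, j ≠ i → j ≠ i + 1 → nu j = lam j) ∧
      Odd ((aFun nu : ℤ) - (aFun lam : ℤ))) := by
  constructor
  · intro hx
    obtain ⟨k, rfl⟩ := eq_add_single_of_notMem hlam.1 hnu.1 hhook hx
    refine ⟨⟨k, by simp, fun j hj => by simp [hj]⟩, ?_⟩
    rw [aFun_add hlam.finite_support (finite_support_single k 2), aFun_single]
    exact ⟨k, by push_cast; ring⟩
  · intro hx
    obtain ⟨i, hi, rfl⟩ := eq_add_single_of_mem hlam.1 hnu.1 hhook hx
    refine ⟨⟨i, hi, by simp, by simp, fun j hj hj' => by simp [hj, hj']⟩, ?_⟩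
    have h1 := finite_support_single i 1
    have h2 := finite_support_single (i + 1) 1
    have h12 : (Pi.single i 1 + Pi.single (i + 1) 1 : ℕ → ℕ).support.Finite :=
      (h1.union h2).subset (Function.support_add _ _)
    rw [aFun_add hlam.finite_support h12, aFun_add h1 h2, aFun_single, aFun_single]
    exact ⟨i, by push_cast; ring⟩
end

section
/- Fix d >= 1, t ∈ Z and a bipartition mu = (mu^1, mu^2); set X = beta_t(mu^1) and Y = beta_{d-1-t}(mu^2). Write tau_{2d}(mu^1, t) = (_, s) and tau_{2d}(mu^2, d-1-t) = (_, r) with s, r ∈ Z^{2d}. Then no d-cohook can be removed from (mu, t) — equivalently X ⊆ Y ⊆ X + 2d — if and only if mu^1 and mu^2 are 2d-cores and r_p - s_p ∈ {0, 1} for every p ∈ {1, ..., 2d}. -/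
/-- `TauCharge l f c s` : `s ∈ ℤ^l` is the charge component of `τ_l(f, c)`, i.e. there is an
`l`-tuple of partitions `ν` with `β_c(f) = ⊔_{p=1}^{l} (p - l + l·β_{s_p}(ν^p))`. -/
def TauCharge (l : ℕ) (f : ℕ → ℕ) (c : ℤ) (s : Fin l → ℤ) : Prop :=
  ∃ ν : Fin l → (ℕ → ℕ), (∀ p, IsPartition (ν p)) ∧
    betaSet f c =
      ⋃ p : Fin l, (fun b => ((p : ℕ) : ℤ) + 1 - (l : ℤ) + (l : ℤ) * b) '' betaSet (ν p) (s p)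

/-- `lam` is an `e`-core: `(lam, 0)` has no `e`-hook. -/
def IsECore (e : ℕ) (f : ℕ → ℕ) : Prop :=
  ¬ ∃ x : ℤ, x + (e : ℤ) ∈ betaSet f 0 ∧ x ∉ betaSet f 0

/-- `(n1, n2, t')` is obtained from the charged bipartition `(m1, m2, t)` by removing a
`d`-cohook, where `X = β_t(m1)` and `Y = β_{d-1-t}(m2)`. -/
def RemoveCohook (d : ℕ) (m1 m2 : ℕ → ℕ) (t : ℤ) (n1 n2 : ℕ → ℕ) (t' : ℤ) : Prop :=
  (∃ x : ℤ, x ∈ betaSet m1 t ∧ x ∉ betaSet m2 ((d : ℤ) - 1 - t) ∧ t' = t - 1 ∧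
      betaSet n1 t' = betaSet m1 t \ {x} ∧
      betaSet n2 ((d : ℤ) - 1 - t') = betaSet m2 ((d : ℤ) - 1 - t) ∪ {x}) ∨
  (∃ y : ℤ, y ∈ betaSet m2 ((d : ℤ) - 1 - t) ∧ y - 2 * (d : ℤ) ∉ betaSet m1 t ∧ t' = t + 1 ∧
      betaSet n1 t' = betaSet m1 t ∪ {y - 2 * (d : ℤ)} ∧
      betaSet n2 ((d : ℤ) - 1 - t') = betaSet m2 ((d : ℤ) - 1 - t) \ {y})

/-! ### Deleting and inserting an element of a beta-set -/

lemma betaSet_remove {f : ℕ → ℕ} (hf : IsPartition f) {c x : ℤ} (hx : x ∈ betaSet f c) :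
    ∃ g, IsPartition g ∧ betaSet g (c - 1) = betaSet f c \ {x} := by
  obtain ⟨hanti, N, hN⟩ := hf
  obtain ⟨k, hk⟩ := hx
  -- The decreasing enumeration of the new set skips the index `k` of `x`.
  refine ⟨fun i => if i < k then f i + 1 else f (i + 1), ⟨?_, N + k, ?_⟩, ?_⟩
  · refine antitone_nat_of_succ_le fun i => ?_
    have h1 := hanti (Nat.le_succ i)
    have h2 := hanti (Nat.le_succ (i + 1))
    simp only [Nat.succ_eq_add_one] at h1 h2
    split_ifs <;> omega
  · intro i hi
    have h1 := hN (i + 1) (by omega)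
    dsimp only
    split_ifs <;> omega
  · ext z
    simp only [betaSet, Set.mem_ofPred_eq, Set.mem_sdiff, Set.mem_singleton_iff]
    constructor
    · rintro ⟨i, hi⟩
      by_cases hik : i < k
      · have h1 := hanti hik.le
        rw [if_pos hik] at hi
        push_cast at hi
        exact ⟨⟨i, by omega⟩, by omega⟩
      · have h1 := hanti (show k ≤ i + 1 by omega)
        rw [if_neg hik] at hi
        exact ⟨⟨i + 1, by push_cast; omega⟩, by omega⟩
    · rintro ⟨⟨i, hi⟩, hne⟩
      rcases lt_trichotomy i k with h | h | h
      · exact ⟨i, by rw [if_pos h]; push_cast; omega⟩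
      · subst h; omega
      · obtain ⟨j, rfl⟩ : ∃ j, i = j + 1 := ⟨i - 1, by omega⟩
        exact ⟨j, by rw [if_neg (by omega)]; push_cast at hi; omega⟩

lemma betaSet_insert {f : ℕ → ℕ} (hf : IsPartition f) {c x : ℤ} (hx : x ∉ betaSet f c) :
    ∃ g, IsPartition g ∧ betaSet g (c + 1) = betaSet f c ∪ {x} := by
  obtain ⟨hanti, N, hN⟩ := hf
  have hne : ∀ i : ℕ, x ≠ (f i : ℤ) + c - i := fun i hi => hx ⟨i, hi⟩
  have hex : ∃ k : ℕ, (f k : ℤ) + c - k < x := by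
    refine ⟨N + (c - x).toNat + 1, ?_⟩
    rw [hN _ (by omega)]
    push_cast
    omega
  -- `k` is the position of `x` in the decreasing enumeration of the new set.
  obtain ⟨k, hk, hmin⟩ : ∃ k : ℕ, (f k : ℤ) + c - k < x ∧
      ∀ i < k, x < (f i : ℤ) + c - i := by
    classical
    refine ⟨Nat.find hex, Nat.find_spec hex, fun i hi => ?_⟩
    have h1 := Nat.find_min hex hi
    have h2 := hne i
    omega
  -- If a part before position `k` vanished, every integer up to `β_i > x` would be in the beta-set.
  have hpos : ∀ i < k, 1 ≤ f i := by
    intro i hi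
    by_contra h
    have h1 := hmin i hi
    have h2 := hanti (show i ≤ (c - x).toNat by omega)
    have h3 := hne (c - x).toNat
    omega
  have hxk : ((x - c - 1 + k).toNat : ℤ) = x - c - 1 + k := by omega
  refine ⟨fun i => if i < k then f i - 1 else if i = k then (x - c - 1 + k).toNat else f (i - 1),
    ⟨?_, N + k + 1, ?_⟩, ?_⟩
  · refine antitone_nat_of_succ_le fun i => ?_
    have h1 := hanti (Nat.le_succ i)
    have h2 := hanti (Nat.sub_le i 1)
    have h3 := hmin i
    simp only [Nat.succ_eq_add_one] at h1
    rw [Nat.add_sub_cancel]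
    rcases lt_trichotomy i k with h | h | h
    · have h4 := hpos i h
      have h3 := h3 h
      split_ifs <;> omega
    · subst h
      split_ifs <;> omega
    · split_ifs <;> omega
  · intro i hi
    have h1 := hN (i - 1) (by omega)
    dsimp only
    split_ifs <;> omega
  · ext z
    simp only [betaSet, Set.mem_ofPred_eq, Set.mem_union, Set.mem_singleton_iff]
    constructor
    · rintro ⟨i, hi⟩
      rcases lt_trichotomy i k with h | h | h
      · have h4 := hpos i h
        rw [if_pos h] at hi
        exact Or.inl ⟨i, by omega⟩
      · rw [if_neg (by omega), if_pos h] at hi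
        exact Or.inr (by omega)
      · rw [if_neg (by omega), if_neg (by omega)] at hi
        exact Or.inl ⟨i - 1, by omega⟩
    · rintro (⟨i, hi⟩ | hi)
      · by_cases h : i < k
        · have h4 := hpos i h
          exact ⟨i, by rw [if_pos h]; omega⟩
        · refine ⟨i + 1, ?_⟩
          rw [if_neg (by omega), if_neg (by omega), Nat.add_sub_cancel]
          push_cast
          omega
      · exact ⟨k, by rw [if_neg (by omega), if_pos rfl]; omega⟩

/-! ### Cores and half-lines -/

lemma betaSet_eq_Iic {f : ℕ → ℕ} (hf : IsPartition f) {c : ℤ}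
    (h : ∀ b ∈ betaSet f c, b - 1 ∈ betaSet f c) : betaSet f c = Set.Iic c := by
  obtain ⟨hanti, N, hN⟩ := hf
  -- The predecessor of the `i`-th element is an element, so it is the next one.
  have hstep : ∀ i, f (i + 1) = f i := by
    intro i
    obtain ⟨j, hj⟩ := h _ ⟨i, rfl⟩
    have h1 := hanti (Nat.le_succ i)
    have hij : i < j := by
      by_contra hle
      have := hanti (not_lt.mp hle)
      omega
    have h2 := hanti hij.le
    obtain rfl : j = i + 1 := by omega
    push_cast at hj
    omega
  have hconst : ∀ i, f i = f 0 := by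
    intro i
    induction i with
    | zero => rfl
    | succ i ih => rw [hstep, ih]
  have hzero : ∀ i, f i = 0 := fun i => by rw [hconst, ← hconst N, hN N le_rfl]
  ext b
  simp only [betaSet, Set.mem_ofPred_eq, Set.mem_Iic, hzero]
  constructor
  · rintro ⟨i, hi⟩
    omega
  · intro hb
    exact ⟨(c - b).toNat, by omega⟩

/-- Being an `e`-core does not depend on the charge. -/
lemma isECore_iff (e : ℕ) (f : ℕ → ℕ) (c : ℤ) :
    IsECore e f ↔ ∀ x ∈ betaSet f c, x - e ∈ betaSet f c := by
  have hshift : ∀ z, z ∈ betaSet f c ↔ z - c ∈ betaSet f 0 := by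
    intro z
    simp only [betaSet, Set.mem_ofPred_eq]
    exact exists_congr fun i => by omega
  constructor
  · intro h x hx
    by_contra hn
    rw [hshift] at hx hn
    exact h ⟨x - e - c, by rwa [show x - e - c + e = x - c by ring], hn⟩
  · rintro h ⟨x, h1, h2⟩
    have h3 := h (x + e + c) (by rw [hshift]; simpa using h1)
    rw [hshift, show x + e + c - e - c = x by ring] at h3
    exact h2 h3

/-- The `p`-th runner of the `l`-abacus of `(f, c)` is the `p`-th component of `τ_l(f, c)`. -/
lemma TauCharge.mem_iff {l : ℕ} {f : ℕ → ℕ} {c : ℤ} {s : Fin l → ℤ} (h : TauCharge l f c s) :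
    ∃ ν : Fin l → (ℕ → ℕ), (∀ p, IsPartition (ν p)) ∧
      ∀ (p : Fin l) (b : ℤ), (p : ℤ) + 1 - l + l * b ∈ betaSet f c ↔ b ∈ betaSet (ν p) (s p) := by
  obtain ⟨ν, hν, heq⟩ := h
  refine ⟨ν, hν, fun p b => ?_⟩
  rw [heq, Set.mem_iUnion]
  constructor
  · rintro ⟨q, b', hb', hq⟩
    dsimp only at hq
    have hmul : (l : ℤ) * (b' - b) = (p : ℤ) - q := by linear_combination hq
    have hp := p.isLt
    have hq' := q.isLt
    -- `|p - q| < l` forces the multiple `l * (b' - b)` to vanish.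
    have hz : (p : ℤ) - q = 0 :=
      Int.eq_zero_of_abs_lt_dvd ⟨b' - b, hmul.symm⟩ (by rw [abs_lt]; constructor <;> omega)
    have hb : b' - b = 0 := by
      rw [hz] at hmul
      exact (mul_eq_zero.mp hmul).resolve_left (by omega)
    obtain rfl : p = q := Fin.ext (by omega)
    obtain rfl : b' = b := by omega
    exact hb'
  · intro hb
    exact ⟨p, b, hb, rfl⟩

/-- The beta-set of an `l`-core is a half-line on each runner, ending at the charge. -/
lemma mem_iff_of_core {l : ℕ} {f : ℕ → ℕ} {c : ℤ} {s : Fin l → ℤ}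
    (h : TauCharge l f c s) (hcore : IsECore l f) (p : Fin l) (b : ℤ) :
    (p : ℤ) + 1 - l + l * b ∈ betaSet f c ↔ b ≤ s p := by
  obtain ⟨ν, hν, hmem⟩ := h.mem_iff
  rw [isECore_iff l f c] at hcore
  rw [hmem, betaSet_eq_Iic (hν p), Set.mem_Iic]
  intro a ha
  rw [← hmem] at ha ⊢
  have := hcore _ ha
  rwa [show (p : ℤ) + 1 - l + l * a - l = (p : ℤ) + 1 - l + l * (a - 1) by ring] at this

lemma exists_runner {l : ℕ} (hl : 0 < l) (x : ℤ) :
    ∃ (p : Fin l) (b : ℤ), x = (p : ℤ) + 1 - l + l * b := by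
  have hl' : (0 : ℤ) < l := by exact_mod_cast hl
  have h1 := Int.emod_nonneg (x - 1) hl'.ne'
  have h2 := Int.emod_lt_of_pos (x - 1) hl'
  have h3 := Int.emod_add_mul_ediv (x - 1) l
  refine ⟨⟨((x - 1) % l).toNat, by omega⟩, (x - 1) / l + 1, ?_⟩
  simp only [Int.toNat_of_nonneg h1]
  linear_combination -h3

/-- no `d`-cohook can be removed from `(μ, t)` — equivalently
`X ⊆ Y ⊆ X + 2d` — if and only if `μ¹` and `μ²` are `2d`-cores and `r_p - s_p ∈ {0, 1}`
for all `p`. -/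
theorem statement4 (d : ℕ) (hd : 1 ≤ d) (mu1 mu2 : ℕ → ℕ)
    (hmu1 : IsPartition mu1) (hmu2 : IsPartition mu2) (t : ℤ)
    (s r : Fin (2 * d) → ℤ)
    (hs : TauCharge (2 * d) mu1 t s) (hr : TauCharge (2 * d) mu2 ((d : ℤ) - 1 - t) r) :
    ((¬ ∃ (n1 n2 : ℕ → ℕ) (t' : ℤ), IsPartition n1 ∧ IsPartition n2 ∧
        RemoveCohook d mu1 mu2 t n1 n2 t') ↔
      (betaSet mu1 t ⊆ betaSet mu2 ((d : ℤ) - 1 - t) ∧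
        betaSet mu2 ((d : ℤ) - 1 - t) ⊆ (fun b => b + 2 * (d : ℤ)) '' betaSet mu1 t)) ∧
    ((betaSet mu1 t ⊆ betaSet mu2 ((d : ℤ) - 1 - t) ∧
        betaSet mu2 ((d : ℤ) - 1 - t) ⊆ (fun b => b + 2 * (d : ℤ)) '' betaSet mu1 t) ↔
      (IsECore (2 * d) mu1 ∧ IsECore (2 * d) mu2 ∧
        ∀ p : Fin (2 * d), r p - s p = 0 ∨ r p - s p = 1)) := by
  have himg : ∀ (S : Set ℤ) (y : ℤ),
      y ∈ (fun b => b + 2 * (d : ℤ)) '' S ↔ y - 2 * (d : ℤ) ∈ S := by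
    intro S y
    constructor
    · rintro ⟨b, hb, rfl⟩
      simpa using hb
    · intro h
      exact ⟨_, h, by ring⟩
  constructor
  · constructor
    · intro hno
      constructor
      · intro x hx
        by_contra hn
        obtain ⟨n1, h1, e1⟩ := betaSet_remove hmu1 hx
        obtain ⟨n2, h2, e2⟩ := betaSet_insert hmu2 hn
        refine hno ⟨n1, n2, t - 1, h1, h2, Or.inl ⟨x, hx, hn, rfl, e1, ?_⟩⟩
        rw [← e2]
        congr 1
        ring
      · intro y hy
        rw [himg]
        by_contra hn
        obtain ⟨n1, h1, e1⟩ := betaSet_insert hmu1 hn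
        obtain ⟨n2, h2, e2⟩ := betaSet_remove hmu2 hy
        refine hno ⟨n1, n2, t + 1, h1, h2, Or.inr ⟨y, hy, hn, rfl, e1, ?_⟩⟩
        rw [← e2]
        congr 1
        ring
    · rintro ⟨hXY, hYX⟩ ⟨n1, n2, t', -, -, ⟨x, hx, hn, -⟩ | ⟨y, hy, hn, -⟩⟩
      · exact hn (hXY hx)
      · exact hn ((himg _ _).mp (hYX hy))
  · have hcast : ((2 * d : ℕ) : ℤ) = 2 * (d : ℤ) := by push_cast; rfl
    constructor
    · rintro ⟨hXY, hYX⟩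
      have hc1 : IsECore (2 * d) mu1 := by
        rw [isECore_iff _ _ t, hcast]
        exact fun x hx => (himg _ _).mp (hYX (hXY hx))
      have hc2 : IsECore (2 * d) mu2 := by
        rw [isECore_iff _ _ ((d : ℤ) - 1 - t), hcast]
        exact fun x hx => hXY ((himg _ _).mp (hYX hx))
      refine ⟨hc1, hc2, fun p => ?_⟩
      have h1 : s p ≤ r p :=
        (mem_iff_of_core hr hc2 p (s p)).mp (hXY ((mem_iff_of_core hs hc1 p (s p)).mpr le_rfl))
      have h2 : r p - 1 ≤ s p := by
        have h := (himg _ _).mp (hYX ((mem_iff_of_core hr hc2 p (r p)).mpr le_rfl))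
        rw [← mem_iff_of_core hs hc1 p]
        convert h using 1
        push_cast
        ring
      omega
    · rintro ⟨hc1, hc2, hrs⟩
      constructor
      · intro x hx
        obtain ⟨p, b, rfl⟩ := exists_runner (show 0 < 2 * d by omega) x
        rw [mem_iff_of_core hs hc1] at hx
        rw [mem_iff_of_core hr hc2]
        have := hrs p
        omega
      · intro y hy
        rw [himg]
        obtain ⟨p, b, rfl⟩ := exists_runner (show 0 < 2 * d by omega) y
        rw [mem_iff_of_core hr hc2] at hy
        have h : b - 1 ≤ s p := by
          have := hrs p
          omega
        rw [← mem_iff_of_core hs hc1 p] at h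
        convert h using 1
        push_cast
        ring
end

section
/- Fix d >= 1. If the pair (mu', t') (a bipartition together with an integer) is obtained from (mu, t) by removing a d-cohook, then wt(mu, t) = wt(mu', t') - delta/2 in the vector space X_d. -/
instance instNeZeroTwoMul (d : ℕ) [NeZero d] : NeZero (2 * d) :=
  ⟨Nat.mul_ne_zero two_ne_zero (NeZero.ne d)⟩

/-- `X_d`: the `ℚ`-vector space with basis `{Λ_i : i ∈ ℤ/2d} ∪ {δ}`. -/
abbrev Xspace (d : ℕ) : Type := Option (ZMod (2 * d)) →₀ ℚ

/-- The fundamental weight `Λ_i`. -/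
noncomputable def Lam (d : ℕ) (i : ZMod (2 * d)) : Xspace d := Finsupp.single (some i) 1

/-- The basis vector `δ`. -/
noncomputable def deltaX (d : ℕ) : Xspace d := Finsupp.single none 1

/-- The simple root `α_i = 2Λ_i - Λ_{i-1} - Λ_{i+1} + ε_i δ`, with `ε_i = 1` iff `i = 0`. -/
noncomputable def alphaX (d : ℕ) (i : ZMod (2 * d)) : Xspace d :=
  2 • Lam d i - Lam d (i - 1) - Lam d (i + 1) + (if i = 0 then deltaX d else 0)

/-- `Δ(v, e) = (v̄ (1 - v̄/e) + v (v/e - 1)) / 2` where `v̄ ∈ {0, …, e-1}` and `v̄ ≡ v (mod e)`. -/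
noncomputable def DeltaQ (v : ℤ) (e : ℕ) : ℚ :=
  ((Int.emod v e : ℤ) * (1 - ((Int.emod v e : ℤ) : ℚ) / e) + v * ((v : ℚ) / e - 1)) / 2

/-- The number of boxes of the partition `f` whose `c`-shifted content is `≡ i (mod 2d)`
(boxes are `0`-indexed: `(a, b)` with `b < f a` has shifted content `c + b - a`). -/
noncomputable def nBox (d : ℕ) (f : ℕ → ℕ) (c : ℤ) (i : ZMod (2 * d)) : ℕ :=
  Set.ncard {p : ℕ × ℕ | p.2 < f p.1 ∧ ((c + (p.2 : ℤ) - (p.1 : ℤ) : ℤ) : ZMod (2 * d)) = i}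

/-- The weight `wt(μ, t) = Λ_{[t]} + Λ_{[d-1-t]} - ∑_i n_i(μ,t) α_i
- (Δ(t,2d) + Δ(d-1-t,2d) + t/2) δ` of the charged bipartition `(μ¹, μ², t)`. -/
noncomputable def wt (d : ℕ) [NeZero d] (f g : ℕ → ℕ) (t : ℤ) : Xspace d :=
  Lam d (t : ZMod (2 * d)) + Lam d (((d : ℤ) - 1 - t : ℤ) : ZMod (2 * d))
    - ∑ i : ZMod (2 * d),
        ((nBox d f t i + nBox d g ((d : ℤ) - 1 - t) i : ℕ) : ℚ) • alphaX d i
    - (DeltaQ t (2 * d) + DeltaQ ((d : ℤ) - 1 - t) (2 * d) + (t : ℚ) / 2) • deltaX d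

/-- The weight `ε(x) = Λ_x - Λ_{x-1} - ⌊(x-1)/2d⌋ δ` of a bead at position `x`. -/
noncomputable def beadWt (d : ℕ) (x : ℤ) : Xspace d :=
  Lam d (x : ZMod (2 * d)) - Lam d ((x - 1 : ℤ) : ZMod (2 * d))
    - (((x - 1) / ((2 * d : ℕ) : ℤ) : ℤ) : ℚ) • deltaX d

/-- The weight `Λ_c - Δ(c, 2d) δ` of the empty partition of charge `c`. -/
noncomputable def vacWt (d : ℕ) (c : ℤ) : Xspace d :=
  Lam d (c : ZMod (2 * d)) - DeltaQ c (2 * d) • deltaX d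

/-- The contribution `Λ_c - ∑ n_i α_i - Δ(c, 2d) δ` of one charged partition to `wt`. -/
noncomputable def halfWt (d : ℕ) [NeZero d] (f : ℕ → ℕ) (c : ℤ) : Xspace d :=
  vacWt d c - ∑ i : ZMod (2 * d), (nBox d f c i : ℚ) • alphaX d i

theorem wt_eq_halfWt (d : ℕ) [NeZero d] (f g : ℕ → ℕ) (t : ℤ) :
    wt d f g t = halfWt d f t + halfWt d g ((d : ℤ) - 1 - t) - ((t : ℚ) / 2) • deltaX d := by
  simp only [wt, halfWt, vacWt, Nat.cast_add, add_smul, Finset.sum_add_distrib]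
  abel

theorem DeltaQ_sub (v : ℤ) (e : ℕ) (he : 0 < e) :
    DeltaQ v e - DeltaQ (v - 1) e = (((v - 1) / (e : ℤ) : ℤ) : ℚ) := by
  have he' : (0 : ℤ) < e := by exact_mod_cast he
  have heq : (e : ℚ) ≠ 0 := by exact_mod_cast he.ne'
  have h1 := Int.mul_ediv_add_emod (v - 1) e
  have h2 := Int.emod_nonneg (v - 1) he'.ne'
  have h3 := Int.emod_lt_of_pos (v - 1) he'
  have hd : ∀ w : ℤ, Int.emod w e = w % (e : ℤ) := fun _ => rfl
  simp only [DeltaQ, hd]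
  generalize (v - 1) / (e : ℤ) = q at *
  generalize (v - 1) % (e : ℤ) = r at *
  obtain rfl : v = e * q + r + 1 := by omega
  by_cases hr : r + 1 < e
  · have : ((e : ℤ) * q + r + 1) % e = r + 1 := by
      rw [add_assoc, Int.mul_add_emod_self_left]
      exact Int.emod_eq_of_lt (by omega) hr
    rw [this]
    push_cast
    field_simp
    ring
  · obtain rfl : r = e - 1 := by omega
    have : ((e : ℤ) * q + (e - 1) + 1) % e = 0 := by
      rw [show (e : ℤ) * q + (e - 1) + 1 = e * (q + 1) by ring]
      exact Int.mul_emod_right _ _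
    rw [this]
    push_cast
    field_simp
    ring

theorem vacWt_sub (d : ℕ) [NeZero d] (c : ℤ) : vacWt d c = vacWt d (c - 1) + beadWt d c := by
  have := DeltaQ_sub c (2 * d) (Nat.pos_of_ne_zero (NeZero.ne (2 * d)))
  rw [beadWt, ← this, vacWt, vacWt, sub_smul]
  abel

theorem ediv_sub_ediv_pred (j : ℤ) (e : ℕ) (he : 0 < e) :
    j / (e : ℤ) = (j - 1) / (e : ℤ) + if (j : ZMod e) = 0 then 1 else 0 := by
  have he' : (0 : ℤ) < e := by exact_mod_cast he
  have h1 := Int.mul_ediv_add_emod (j - 1) e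
  have h2 := Int.emod_nonneg (j - 1) he'.ne'
  have h3 := Int.emod_lt_of_pos (j - 1) he'
  rw [if_congr (ZMod.intCast_zmod_eq_zero_iff_dvd j e) rfl rfl]
  generalize (j - 1) / (e : ℤ) = q at *
  generalize (j - 1) % (e : ℤ) = r at *
  obtain rfl : j = r + 1 + e * q := by omega
  rw [Int.add_mul_ediv_left _ _ he'.ne',
    if_congr (Int.dvd_add_left (Dvd.intro q rfl)) rfl rfl]
  by_cases hr : r + 1 < e
  · rw [Int.ediv_eq_zero_of_lt (by omega) hr, if_neg]
    · ring
    · intro h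
      have := Int.le_of_dvd (by omega) h
      omega
  · obtain rfl : r = e - 1 := by omega
    rw [sub_add_cancel, Int.ediv_self he'.ne', if_pos dvd_rfl]
    ring

theorem beadWt_succ (d : ℕ) [NeZero d] (j : ℤ) :
    alphaX d (j : ZMod (2 * d)) = beadWt d j - beadWt d (j + 1) := by
  have := ediv_sub_ediv_pred j (2 * d) (Nat.pos_of_ne_zero (NeZero.ne (2 * d)))
  simp only [alphaX, beadWt, add_sub_cancel_right, this]
  split_ifs
  · push_cast
    module
  · push_cast
    module

theorem beadWt_sub_period (d : ℕ) [NeZero d] (y : ℤ) :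
    beadWt d (y - 2 * (d : ℤ)) = beadWt d y + deltaX d := by
  have h0 : ((2 * d : ℕ) : ℤ) ≠ 0 := by exact_mod_cast NeZero.ne (2 * d)
  have h1 : (y - 2 * (d : ℤ) - 1) / ((2 * d : ℕ) : ℤ) = (y - 1) / ((2 * d : ℕ) : ℤ) - 1 := by
    rw [show y - 2 * (d : ℤ) - 1 = y - 1 + ((2 * d : ℕ) : ℤ) * (-1) by push_cast; ring,
      Int.add_mul_ediv_left _ _ h0]
    ring
  have h2 : (2 * (d : ZMod (2 * d))) = 0 := by
    have := ZMod.natCast_self (2 * d)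
    push_cast at this
    exact this
  simp only [beadWt, h1]
  push_cast
  rw [h2]
  simp only [sub_zero]
  module

/-- The sum `∑ n_i α_i` read box by box, row after row. -/
theorem sum_nBox (d : ℕ) [NeZero d] (f : ℕ → ℕ) (c : ℤ) (N : ℕ) (hN : ∀ i, N ≤ i → f i = 0) :
    ∑ i : ZMod (2 * d), (nBox d f c i : ℚ) • alphaX d i
      = ∑ a ∈ Finset.range N, ∑ b ∈ Finset.range (f a),
          alphaX d ((c + (b : ℤ) - (a : ℤ) : ℤ) : ZMod (2 * d)) := by
  classical
  let S : Finset (ℕ × ℕ) :=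
    ((Finset.range N).sigma fun a => Finset.range (f a)).map
      (Equiv.sigmaEquivProd ℕ ℕ).toEmbedding
  have hS : ∀ p : ℕ × ℕ, p ∈ S ↔ p.2 < f p.1 := by
    rintro ⟨a, b⟩
    have : b < f a → a < N := fun h => by
      by_contra h'
      rw [hN a (by omega)] at h
      omega
    simp only [S, Finset.mem_map_equiv, Finset.mem_sigma, Finset.mem_range]
    exact ⟨fun h => h.2, fun h => ⟨this h, h⟩⟩
  have hS' : ∀ p : ℕ × ℕ, p ∈ S ↔ p.1 ∈ Finset.range N ∧ p.2 ∈ Finset.range (f p.1) := by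
    rintro ⟨a, b⟩
    simp [S, Finset.mem_map_equiv]
  rw [← Finset.sum_finset_product S (Finset.range N) (fun a => Finset.range (f a)) hS'
    (f := fun p : ℕ × ℕ => alphaX d ((c + (p.2 : ℤ) - (p.1 : ℤ) : ℤ) : ZMod (2 * d))),
    ← Finset.sum_fiberwise S
      (fun p : ℕ × ℕ => ((c + (p.2 : ℤ) - (p.1 : ℤ) : ℤ) : ZMod (2 * d)))]
  refine Finset.sum_congr rfl fun i _ => ?_
  rw [Finset.sum_congr rfl (g := fun _ => alphaX d i)
    (fun p hp => by rw [(Finset.mem_filter.1 hp).2]), Finset.sum_const, Nat.cast_smul_eq_nsmul]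
  congr 1
  rw [nBox, ← Set.ncard_coe_finset]
  congr 1
  ext p
  simp [hS]

/-- The beads of `β_c(f)` in the first `N` rows. -/
def beads (f : ℕ → ℕ) (c : ℤ) (N : ℕ) : Finset ℤ :=
  (Finset.range N).image fun i => (f i : ℤ) + c - i

theorem mem_beads {f : ℕ → ℕ} {c : ℤ} {N : ℕ} (hN : ∀ i, N ≤ i → f i = 0) (z : ℤ) :
    z ∈ beads f c N ↔ z ∈ betaSet f c ∧ c - N < z := by
  simp only [beads, Finset.mem_image, Finset.mem_range, betaSet, Set.mem_ofPred_eq]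
  constructor
  · rintro ⟨i, hi, rfl⟩
    exact ⟨⟨i, rfl⟩, by omega⟩
  · rintro ⟨⟨i, rfl⟩, h⟩
    refine ⟨i, ?_, rfl⟩
    by_contra h'
    rw [hN i (by omega)] at h
    push_cast at h
    omega

theorem halfWt_eq (d : ℕ) [NeZero d] (f : ℕ → ℕ) (hf : Antitone f) (c : ℤ) (N : ℕ)
    (hN : ∀ i, N ≤ i → f i = 0) :
    halfWt d f c = vacWt d (c - N) + ∑ z ∈ beads f c N, beadWt d z := by
  have hvac : vacWt d c = vacWt d (c - N) + ∑ a ∈ Finset.range N, beadWt d (c - a) := by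
    clear hN
    induction N with
    | zero => simp
    | succ k ih =>
      rw [ih, Finset.sum_range_succ, vacWt_sub d (c - k)]
      push_cast
      rw [show c - (k : ℤ) - 1 = c - (k + 1) by ring]
      abel
  have hrow : ∀ a : ℕ, ∑ b ∈ Finset.range (f a),
      alphaX d ((c + (b : ℤ) - (a : ℤ) : ℤ) : ZMod (2 * d))
        = beadWt d (c - a) - beadWt d (f a + c - a) := by
    intro a
    induction f a with
    | zero => simp
    | succ k ih =>
      rw [Finset.sum_range_succ, ih, beadWt_succ]
      push_cast
      rw [show c + (k : ℤ) - a = k + c - a by ring,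
        show (k : ℤ) + 1 + c - a = k + c - a + 1 by ring]
      abel
  have hinj : Function.Injective fun i : ℕ => (f i : ℤ) + c - i := by
    apply StrictAnti.injective
    intro i j hij
    have := hf hij.le
    simp only
    omega
  rw [halfWt, sum_nBox d f c N hN, hvac, beads, Finset.sum_image hinj.injOn]
  simp only [hrow, Finset.sum_sub_distrib]
  abel

theorem halfWt_insert (d : ℕ) [NeZero d] {m n : ℕ → ℕ} (hm : IsPartition m) (hn : IsPartition n)
    {c c' x : ℤ} (hc : c' = c + 1) (hx : x ∉ betaSet m c)
    (h : betaSet n c' = betaSet m c ∪ {x}) :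
    halfWt d n c' = halfWt d m c + beadWt d x := by
  subst hc
  obtain ⟨hm0, M, hM⟩ := hm
  obtain ⟨hn0, K, hK⟩ := hn
  set N := max M K
  have hmN : ∀ i, N ≤ i → m i = 0 := fun i hi => hM i (by omega)
  have hnN : ∀ i, N + 1 ≤ i → n i = 0 := fun i hi => hK i (by omega)
  -- every integer `≤ c - N` is a bead of `m`, so the new bead lies above that threshold
  have hxN : c - N < x := by
    by_contra hlt
    refine hx ⟨(c - x).toNat, ?_⟩
    rw [hmN _ (by omega)]
    push_cast
    omega
  have hxb : x ∉ beads m c N := fun hb => hx ((mem_beads hmN x).1 hb).1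
  have hb : beads n (c + 1) (N + 1) = insert x (beads m c N) := by
    ext z
    rw [mem_beads hnN, Finset.mem_insert, mem_beads hmN, h]
    simp only [Set.mem_union, Set.mem_singleton_iff]
    push_cast
    rw [show c + 1 - ((N : ℤ) + 1) = c - N by ring]
    constructor
    · tauto
    · rintro (rfl | hz)
      · exact ⟨Or.inr rfl, hxN⟩
      · exact ⟨Or.inl hz.1, hz.2⟩
  rw [halfWt_eq d n hn0 (c + 1) (N + 1) hnN, halfWt_eq d m hm0 c N hmN, hb,
    Finset.sum_insert hxb]
  push_cast
  rw [show c + 1 - ((N : ℤ) + 1) = c - N by ring]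
  abel

/-- if `(μ', t')` is obtained from `(μ, t)` by removing a `d`-cohook, then
`wt(μ, t) = wt(μ', t') - δ/2`. -/
theorem statement6 (d : ℕ) [NeZero d] (m1 m2 n1 n2 : ℕ → ℕ)
    (hm1 : IsPartition m1) (hm2 : IsPartition m2)
    (hn1 : IsPartition n1) (hn2 : IsPartition n2) (t t' : ℤ)
    (h : RemoveCohook d m1 m2 t n1 n2 t') :
    wt d m1 m2 t = wt d n1 n2 t' - (1 / 2 : ℚ) • deltaX d := by
  rw [wt_eq_halfWt, wt_eq_halfWt]
  rcases h with ⟨x, hx, hxY, rfl, h1, h2⟩ | ⟨y, hy, hyX, rfl, h1, h2⟩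
  · have e1 : halfWt d m1 t = halfWt d n1 (t - 1) + beadWt d x :=
      halfWt_insert d hn1 hm1 (by ring) (by rw [h1]; simp)
        (by rw [h1, Set.sdiff_union_of_subset (by simpa using hx)])
    have e2 := halfWt_insert d hm2 hn2 (by ring) hxY h2
    rw [e1, e2]
    push_cast
    module
  · have e1 := halfWt_insert d hm1 hn1 rfl hyX h1
    have e2 : halfWt d m2 ((d : ℤ) - 1 - t)
        = halfWt d n2 ((d : ℤ) - 1 - (t + 1)) + beadWt d y :=
      halfWt_insert d hn2 hm2 (by ring) (by rw [h2]; simp)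
        (by rw [h2, Set.sdiff_union_of_subset (by simpa using hy)])
    rw [e1, e2, beadWt_sub_period]
    push_cast
    module
end
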